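/- arXiv:1402.2576 — 5 statements merged into one kernel-verified Lean document; each statement's English description precedes it below -/
import Mathlib

section
/- For every continuously differentiable, compactly supported function u : ℝ² → ℝ, the square of its L⁴ norm is bounded by twice the product of its L² norm and the L² norm of its gradient: (∫_{ℝ²} u⁴ dxdy)^{1/2} ≤ 2 (∫_{ℝ²} u² dxdy)^{1/2} (∫_{ℝ²} (u_x² + u_y²) dxdy)^{1/2}. -/
open MeasureTheory Real

/-- Partial derivative with respect to the first coordinate. -/
noncomputable def pdx (u : ℝ × ℝ → ℝ) : ℝ × ℝ → ℝ :=
  fun p => deriv (fun x => u (x, p.2)) p.1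

/-- Partial derivative with respect to the second coordinate. -/
noncomputable def pdy (u : ℝ × ℝ → ℝ) : ℝ × ℝ → ℝ :=
  fun p => deriv (fun y => u (p.1, y)) p.2

theorem lady_oneDim (f : ℝ → ℝ) (hf : ContDiff ℝ 1 f) (hs : HasCompactSupport f) (x : ℝ) :
    f x ^ 2 ≤ ∫ s, 2 * |f s * deriv f s| := by
  have hg : ContDiff ℝ 1 (fun s => f s ^ 2) := hf.pow 2
  have hgs : HasCompactSupport (fun s => f s ^ 2) := by
    have := hs.comp_left (g := fun t : ℝ => t ^ 2) (by simp)
    exact this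
  have h1 := hgs.integral_Iic_deriv_eq hg x
  have hd : deriv (fun s => f s ^ 2) = fun s => 2 * (f s * deriv f s) := by
    funext s
    have := ((hf.differentiable one_ne_zero s).hasDerivAt.pow 2).deriv
    have h2 : deriv (fun s => f s ^ 2) s = _ := this
    rw [h2]; push_cast; ring
  have hi : Integrable (fun s => 2 * |f s * deriv f s|) := by
    apply Continuous.integrable_of_hasCompactSupport
    · have := hf.continuous
      have := hf.continuous_deriv (le_refl 1)
      fun_prop
    · apply hs.mono
      intro s h hz
      apply h
      simp [hz]
  have h1' : f x ^ 2 = ∫ s in Set.Iic x, 2 * (f s * deriv f s) := by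
    rw [← h1, hd]
  rw [h1']
  calc _ ≤ ∫ s in Set.Iic x, 2 * |f s * deriv f s| := by
        refine (le_abs_self _).trans ((abs_integral_le_integral_abs).trans (le_of_eq ?_))
        simp [abs_mul]
    _ ≤ _ := setIntegral_le_integral hi (Filter.Eventually.of_forall fun s => by positivity)

theorem lady_cs (a b : ℝ × ℝ → ℝ) (ha : Integrable (fun p => a p ^ 2))
    (hb : Integrable (fun p => b p ^ 2)) (hab : Integrable (fun p => |a p * b p|)) :
    (∫ p, |a p * b p|) ^ 2 ≤ (∫ p, a p ^ 2) * ∫ p, b p ^ 2 := by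
  have key : ∀ t : ℝ, 0 ≤ (∫ p, a p ^ 2) * (t * t) + (-2 * ∫ p, |a p * b p|) * t
      + ∫ p, b p ^ 2 := by
    intro t
    have h0 : 0 ≤ ∫ p, (t * |a p| - |b p|) ^ 2 := integral_nonneg fun p => sq_nonneg _
    have e : (fun p => (t * |a p| - |b p|) ^ 2) =
        fun p => ((t * t) * a p ^ 2 - (2 * t) * |a p * b p|) + b p ^ 2 := by
      funext p
      rw [abs_mul, ← sq_abs (a p), ← sq_abs (b p)]; ring
    have i1 : Integrable (fun p => (t * t) * a p ^ 2 - (2 * t) * |a p * b p|) :=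
      (ha.const_mul _).sub (hab.const_mul _)
    rw [e, integral_add i1 hb,
      integral_sub (ha.const_mul _) (hab.const_mul _), integral_const_mul,
      integral_const_mul] at h0
    linarith
  have := discrim_le_zero key
  unfold discrim at this
  nlinarith

theorem ladyzhenskaya_inequality_R2 (u : ℝ × ℝ → ℝ)
    (hu : ContDiff ℝ 1 u) (hsupp : HasCompactSupport u) :
    Real.sqrt (∫ p : ℝ × ℝ, (u p) ^ 4) ≤
      2 * Real.sqrt (∫ p : ℝ × ℝ, (u p) ^ 2) *
        Real.sqrt (∫ p : ℝ × ℝ, ((pdx u p) ^ 2 + (pdy u p) ^ 2)) := by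
  have huc := hu.continuous
  have hfc : Continuous (fderiv ℝ u) := hu.continuous_fderiv one_ne_zero
  have hx : pdx u = fun p => fderiv ℝ u p (1, 0) := by
    funext p
    have h := (hu.differentiable one_ne_zero p).hasFDerivAt
    have h2 : HasDerivAt (fun x : ℝ => (x, p.2)) ((1 : ℝ), (0 : ℝ)) p.1 :=
      (hasDerivAt_id p.1).prodMk (hasDerivAt_const _ _)
    exact (HasFDerivAt.comp_hasDerivAt (x := p.1) (f := fun x : ℝ => (x, p.2)) h h2).deriv
  have hy : pdy u = fun p => fderiv ℝ u p (0, 1) := by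
    funext p
    have h := (hu.differentiable one_ne_zero p).hasFDerivAt
    have h2 : HasDerivAt (fun y : ℝ => (p.1, y)) ((0 : ℝ), (1 : ℝ)) p.2 :=
      (hasDerivAt_const _ _).prodMk (hasDerivAt_id p.2)
    exact (HasFDerivAt.comp_hasDerivAt (x := p.2) (f := fun y : ℝ => (p.1, y)) h h2).deriv
  have hxc : Continuous (pdx u) := by rw [hx]; fun_prop
  have hyc : Continuous (pdy u) := by rw [hy]; fun_prop
  have hfs : HasCompactSupport (fderiv ℝ u) := hsupp.fderiv ℝ
  have ix : Integrable (fun p => pdx u p ^ 2) := by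
    apply Continuous.integrable_of_hasCompactSupport (by fun_prop)
    apply hfs.mono
    intro s h hz
    apply h
    simp [hx, hz]
  have iy : Integrable (fun p => pdy u p ^ 2) := by
    apply Continuous.integrable_of_hasCompactSupport (by fun_prop)
    apply hfs.mono
    intro s h hz
    apply h
    simp [hy, hz]
  have iu {g : ℝ × ℝ → ℝ} (hg : Continuous g) (h0 : ∀ p, u p = 0 → g p = 0) : Integrable g := by
    apply Continuous.integrable_of_hasCompactSupport hg
    apply hsupp.mono
    intro s h hz
    exact h (h0 s hz)
  have iu2 : Integrable (fun p => u p ^ 2) := iu (by fun_prop) (by simp +contextual)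
  have iu4 : Integrable (fun p => u p ^ 4) := iu (by fun_prop) (by simp +contextual)
  have iux : Integrable (fun p => |u p * pdx u p|) := iu (by fun_prop) (by simp +contextual)
  have iuy : Integrable (fun p => |u p * pdy u p|) := iu (by fun_prop) (by simp +contextual)
  have cx := lady_cs u (pdx u) iu2 ix iux
  have cy := lady_cs u (pdy u) iu2 iy iuy
  -- slices
  have bx : ∀ p : ℝ × ℝ, u p ^ 2 ≤ ∫ s, 2 * |u (s, p.2) * pdx u (s, p.2)| := by
    intro p
    refine lady_oneDim (fun s => u (s, p.2)) (hu.comp (contDiff_id.prodMk contDiff_const)) ?_ p.1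
    refine HasCompactSupport.intro (hsupp.isCompact.image continuous_fst) ?_
    intro s hs
    by_contra h
    exact hs ⟨(s, p.2), subset_tsupport _ h, rfl⟩
  have bndy : ∀ p : ℝ × ℝ, u p ^ 2 ≤ ∫ s, 2 * |u (p.1, s) * pdy u (p.1, s)| := by
    intro p
    refine lady_oneDim (fun s => u (p.1, s)) (hu.comp (contDiff_const.prodMk contDiff_id)) ?_ p.2
    refine HasCompactSupport.intro (hsupp.isCompact.image continuous_snd) ?_
    intro s hs
    by_contra h
    exact hs ⟨(p.1, s), subset_tsupport _ h, rfl⟩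
  have iux' := iux.const_mul 2
  have iuy' := iuy.const_mul 2
  have main : ∫ p, u p ^ 4 ≤ (2 * ∫ p, |u p * pdy u p|) * (2 * ∫ p, |u p * pdx u p|) := by
    calc ∫ p, u p ^ 4 ≤ ∫ p : ℝ × ℝ, (∫ s, 2 * |u (p.1, s) * pdy u (p.1, s)|) *
          (∫ s, 2 * |u (s, p.2) * pdx u (s, p.2)|) := by
          apply integral_mono iu4
          · exact Integrable.mul_prod (f := fun x => ∫ s, 2 * |u (x, s) * pdy u (x, s)|)
              (g := fun y => ∫ s, 2 * |u (s, y) * pdx u (s, y)|)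
              iuy'.integral_prod_left iux'.integral_prod_right
          · intro p
            have := mul_le_mul (bndy p) (bx p) (sq_nonneg _) ((sq_nonneg _).trans (bndy p))
            calc u p ^ 4 = u p ^ 2 * u p ^ 2 := by ring
              _ ≤ _ := this
      _ = (∫ x, ∫ s, 2 * |u (x, s) * pdy u (x, s)|) *
          (∫ y, ∫ s, 2 * |u (s, y) * pdx u (s, y)|) :=
          integral_prod_mul (fun x => ∫ s, 2 * |u (x, s) * pdy u (x, s)|)
            (fun y => ∫ s, 2 * |u (s, y) * pdx u (s, y)|)
      _ = _ := by
          rw [← integral_const_mul (μ := (volume : Measure (ℝ × ℝ))),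
            ← integral_const_mul (μ := (volume : Measure (ℝ × ℝ)))]
          have e1 := integral_prod _ iuy'
          have e2 := integral_prod_symm _ iux'
          exact congrArg₂ (· * ·) e1.symm e2.symm
  have hU : 0 ≤ ∫ p, u p ^ 2 := integral_nonneg fun p => sq_nonneg _
  have hX : 0 ≤ ∫ p, pdx u p ^ 2 := integral_nonneg fun p => sq_nonneg _
  have hY : 0 ≤ ∫ p, pdy u p ^ 2 := integral_nonneg fun p => sq_nonneg _
  rw [integral_add ix iy]
  apply Real.sqrt_le_iff.2
  refine ⟨by positivity, ?_⟩
  rw [mul_pow, mul_pow, Real.sq_sqrt hU, Real.sq_sqrt (add_nonneg hX hY)]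
  nlinarith [sq_nonneg ((∫ p, |u p * pdy u p|) - ∫ p, |u p * pdx u p|), mul_nonneg hU hX,
    mul_nonneg hU hY]
end

section
/- Let L > 0 and D = (0,∞) × (0,L). Let u : ℝ² → ℝ be twice continuously differentiable with u(x,0) = u(x,L) = 0 for all x ≥ 0, with mixed derivative u_{xy} continuous, with u and all its first and second partial derivatives tending to 0 as x → ∞ uniformly in y, and with ∫_D u² dxdy, ∫_D (u_x² + u_y²) dxdy and ∫_D u_{xy}² dxdy finite. Then sup_{(x,y) ∈ D} u(x,y)² ≤ ∫_D u² dxdy + ∫_D (u_x² + u_y²) dxdy + ∫_D u_{xy}² dxdy. -/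
open MeasureTheory Real

/-- `f` tends to `0` as `x → ∞`, uniformly in `y`. -/
def DecaysUnif (f : ℝ × ℝ → ℝ) : Prop :=
  ∀ ε > 0, ∃ M : ℝ, ∀ x ≥ M, ∀ y : ℝ, |f (x, y)| ≤ ε

lemma aux_abs {g g' : ℝ → ℝ} (hg : ∀ x, HasDerivAt g (g' x) x) (hg' : Continuous g')
    {a b : ℝ} (hab : a ≤ b) :
    |g b ^ 2 - g a ^ 2| ≤ ∫ x in a..b, (g x ^ 2 + g' x ^ 2) := by
  have hgc : Continuous g := continuous_iff_continuousAt.2 fun x => (hg x).continuousAt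
  have h1 : ∫ x in a..b, 2 * g x * g' x = g b ^ 2 - g a ^ 2 := by
    refine intervalIntegral.integral_eq_sub_of_hasDerivAt (f := fun x => g x ^ 2) ?_ ?_
    · intro x _
      have := (hg x).pow 2
      refine this.congr_deriv ?_
      simp
    · exact Continuous.intervalIntegrable (by fun_prop) _ _
  rw [← h1]
  refine (intervalIntegral.abs_integral_le_integral_abs hab).trans ?_
  refine intervalIntegral.integral_mono_on hab
    (Continuous.intervalIntegrable (by fun_prop) _ _)
    (Continuous.intervalIntegrable (by fun_prop) _ _) ?_
  intro x _
  rw [abs_le]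
  constructor <;> nlinarith [sq_nonneg (g x + g' x), sq_nonneg (g x - g' x)]

lemma aux_pdx {u : ℝ × ℝ → ℝ} (hu : Differentiable ℝ u) (p : ℝ × ℝ) :
    HasDerivAt (fun x => u (x, p.2)) (fderiv ℝ u p (1, 0)) p.1 := by
  have h : HasDerivAt (fun x : ℝ => (x, p.2)) ((1 : ℝ), (0 : ℝ)) p.1 :=
    (hasDerivAt_id p.1).prodMk (hasDerivAt_const p.1 p.2)
  exact HasFDerivAt.comp_hasDerivAt p.1 (l := u) (hu p).hasFDerivAt h

lemma aux_pdy {u : ℝ × ℝ → ℝ} (hu : Differentiable ℝ u) (p : ℝ × ℝ) :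
    HasDerivAt (fun y => u (p.1, y)) (fderiv ℝ u p (0, 1)) p.2 := by
  have h : HasDerivAt (fun y : ℝ => (p.1, y)) ((0 : ℝ), (1 : ℝ)) p.2 :=
    (hasDerivAt_const p.2 p.1).prodMk (hasDerivAt_id p.2)
  exact HasFDerivAt.comp_hasDerivAt p.2 (l := u) (hu p).hasFDerivAt h

/-- Sup-norm (Agmon-type) bound on the half-strip `D = (0,∞) × (0,L)`
(first inequality of Proposition 3.3):
`sup_D u² ≤ ‖u‖² + ‖∇u‖² + ‖u_{xy}‖²`. -/
theorem sup_square_halfstrip (L : ℝ) (hL : 0 < L)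
    (D : Set (ℝ × ℝ)) (hD : D = Set.Ioi (0:ℝ) ×ˢ Set.Ioo 0 L)
    (u : ℝ × ℝ → ℝ) (hu : ContDiff ℝ 2 u)
    (hbc : ∀ x ≥ (0:ℝ), u (x, 0) = 0 ∧ u (x, L) = 0)
    (hmix : Continuous (pdx (pdy u)))
    (hdec : DecaysUnif u ∧ DecaysUnif (pdx u) ∧ DecaysUnif (pdy u) ∧
      DecaysUnif (pdx (pdx u)) ∧ DecaysUnif (pdx (pdy u)) ∧ DecaysUnif (pdy (pdy u)))
    (hi1 : IntegrableOn (fun p => (u p) ^ 2) D)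
    (hi2 : IntegrableOn (fun p => (pdx u p) ^ 2 + (pdy u p) ^ 2) D)
    (hi3 : IntegrableOn (fun p => (pdx (pdy u) p) ^ 2) D) :
    ∀ p ∈ D,
      (u p) ^ 2 ≤
        (∫ q in D, (u q) ^ 2) +
          (∫ q in D, ((pdx u q) ^ 2 + (pdy u q) ^ 2)) +
            ∫ q in D, (pdx (pdy u) q) ^ 2 := by
  have hud : Differentiable ℝ u := hu.differentiable (by norm_num)
  have huc : Continuous u := hu.continuous
  have ex : pdx u = fun p => fderiv ℝ u p (1, 0) := funext fun p => (aux_pdx hud p).deriv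
  have ey : pdy u = fun p => fderiv ℝ u p (0, 1) := funext fun p => (aux_pdy hud p).deriv
  have hf : ContDiff ℝ 1 (fderiv ℝ u) := hu.fderiv_right (by norm_num)
  have cx : Continuous (pdx u) := by
    rw [ex]; exact hf.continuous.clm_apply continuous_const
  have dy : ContDiff ℝ 1 (pdy u) := by
    rw [ey]; exact hf.clm_apply contDiff_const
  have cy : Continuous (pdy u) := dy.continuous
  have dyd : Differentiable ℝ (pdy u) := dy.differentiable (by norm_num)
  have Hx : ∀ x y, HasDerivAt (fun x => u (x, y)) (pdx u (x, y)) x := fun x y => by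
    rw [ex]; exact aux_pdx hud (x, y)
  have Hy : ∀ x y, HasDerivAt (fun y => u (x, y)) (pdy u (x, y)) y := fun x y => by
    rw [ey]; exact aux_pdy hud (x, y)
  have Hxy : ∀ x y, HasDerivAt (fun x => pdy u (x, y)) (pdx (pdy u) (x, y)) x := fun x y =>
    (aux_pdx dyd (x, y)).differentiableAt.hasDerivAt
  obtain ⟨du, -, ddy, -, -, -⟩ := hdec
  rintro ⟨x0, y0⟩ hp
  have hp' := hp
  rw [hD] at hp'
  obtain ⟨hx0, hy0, hyL⟩ : 0 < x0 ∧ 0 < y0 ∧ y0 < L := by simpa using hp'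
  set F : ℝ × ℝ → ℝ := fun q => u q ^ 2 + (pdx u q ^ 2 + pdy u q ^ 2) + pdx (pdy u) q ^ 2 with hF
  have hFc : Continuous F := by fun_prop
  have hFi : IntegrableOn F D := (hi1.add hi2).add hi3
  have hsum : (∫ q in D, (u q) ^ 2) + (∫ q in D, ((pdx u q) ^ 2 + (pdy u q) ^ 2)) +
      ∫ q in D, (pdx (pdy u) q) ^ 2 = ∫ q in D, F q := by
    rw [← integral_add hi1 hi2]
    exact (integral_add (hi1.add hi2) hi3).symm
  rw [hsum]
  -- bound in y
  have step1 : u (x0, y0) ^ 2 ≤ ∫ y in (0:ℝ)..y0, (u (x0, y) ^ 2 + pdy u (x0, y) ^ 2) := by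
    have := aux_abs (fun y => Hy x0 y) (by fun_prop) hy0.le
    simp only [(hbc x0 hx0.le).1] at this
    have := (le_abs_self _).trans this
    simpa using this
  refine le_of_forall_pos_le_add fun δ hδ => ?_
  obtain ⟨ε, hε, hεδ⟩ : ∃ ε > 0, 2 * y0 * ε ^ 2 ≤ δ := by
    refine ⟨Real.sqrt (δ / (2 * y0)), by positivity, ?_⟩
    rw [Real.sq_sqrt (by positivity)]
    field_simp
    exact le_rfl
  obtain ⟨M1, hM1⟩ := du ε hε
  obtain ⟨M2, hM2⟩ := ddy ε hε
  set X := max x0 (max M1 M2) with hX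
  have hxX : x0 ≤ X := le_max_left _ _
  have hX1 : M1 ≤ X := (le_max_left _ _).trans (le_max_right _ _)
  have hX2 : M2 ≤ X := (le_max_right _ _).trans (le_max_right _ _)
  have step2 : ∀ y, u (x0, y) ^ 2 + pdy u (x0, y) ^ 2 ≤
      2 * ε ^ 2 + ∫ x in x0..X, F (x, y) := by
    intro y
    have a1 := aux_abs (fun x => Hx x y) (by fun_prop) hxX
    have a2 := aux_abs (fun x => Hxy x y) (by fun_prop) hxX
    have b1 : u (X, y) ^ 2 ≤ ε ^ 2 := sq_le_sq' (abs_le.1 (hM1 X hX1 y)).1 (abs_le.1 (hM1 X hX1 y)).2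
    have b2 : pdy u (X, y) ^ 2 ≤ ε ^ 2 :=
      sq_le_sq' (abs_le.1 (hM2 X hX2 y)).1 (abs_le.1 (hM2 X hX2 y)).2
    have e : ∫ x in x0..X, F (x, y) = (∫ x in x0..X, (u (x, y) ^ 2 + pdx u (x, y) ^ 2)) +
        ∫ x in x0..X, (pdy u (x, y) ^ 2 + pdx (pdy u) (x, y) ^ 2) := by
      rw [← intervalIntegral.integral_add
        (Continuous.intervalIntegrable (by fun_prop) _ _)
        (Continuous.intervalIntegrable (by fun_prop) _ _)]
      congr 1
      funext x
      simp only [hF]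
      ring
    rw [e]
    linarith [(abs_le.1 a1).1, (abs_le.1 a2).1]
  have cI : Continuous fun y => ∫ x in x0..X, F (x, y) := by
    apply intervalIntegral.continuous_parametric_intervalIntegral_of_continuous' (f := fun y x => F (x, y))
    exact hFc.comp continuous_swap
  have step3 : ∫ y in (0:ℝ)..y0, (u (x0, y) ^ 2 + pdy u (x0, y) ^ 2) ≤
      ∫ y in (0:ℝ)..y0, (2 * ε ^ 2 + ∫ x in x0..X, F (x, y)) :=
    intervalIntegral.integral_mono_on hy0.le
      (Continuous.intervalIntegrable (by fun_prop) _ _)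
      (Continuous.intervalIntegrable (by fun_prop) _ _) fun y _ => step2 y
  rw [intervalIntegral.integral_add (Continuous.intervalIntegrable (by fun_prop) _ _)
      (Continuous.intervalIntegrable cI _ _), intervalIntegral.integral_const] at step3
  have hsub : Set.Ioc x0 X ×ˢ Set.Ioc 0 y0 ⊆ D := by
    rw [hD]
    rintro ⟨x, y⟩ ⟨h1, h2⟩
    exact ⟨hx0.trans h1.1, h2.1, h2.2.trans_lt hyL⟩
  have step4 : ∫ y in (0:ℝ)..y0, ∫ x in x0..X, F (x, y) =
      ∫ q in Set.Ioc x0 X ×ˢ Set.Ioc 0 y0, F q := by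
    have hi : IntegrableOn F (Set.Ioc x0 X ×ˢ Set.Ioc 0 y0) := hFi.mono_set hsub
    have hi' : IntegrableOn (fun z : ℝ × ℝ => F z.swap) (Set.Ioc 0 y0 ×ˢ Set.Ioc x0 X)
        (volume.prod volume) := by
      rw [Measure.volume_eq_prod] at hi
      exact hi.swap
    rw [Measure.volume_eq_prod, ← setIntegral_prod_swap, setIntegral_prod _ hi',
      intervalIntegral.integral_of_le hy0.le]
    simp only [intervalIntegral.integral_of_le hxX, Prod.swap]
  have step5 : ∫ q in Set.Ioc x0 X ×ˢ Set.Ioc 0 y0, F q ≤ ∫ q in D, F q :=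
    setIntegral_mono_set hFi (Filter.Eventually.of_forall fun q => by
      simp only [hF, Pi.zero_apply]; positivity) hsub.eventuallyLE
  rw [step4] at step3
  simp only [smul_eq_mul, sub_zero] at step3
  linarith
end

section
/- Let L > 0 and D = (0,∞) × (0,L). Let u : ℝ² → ℝ be three times continuously differentiable with u(x,0) = u(x,L) = 0 for all x ≥ 0, with u_y and its first and second partial derivatives tending to 0 as x → ∞ uniformly in y, and with ∫_D u_y² dxdy, ∫_D (u_{xy}² + u_{yy}²) dxdy and ∫_D u_{xyy}² dxdy finite. Then sup_{(x,y) ∈ D} u_y(x,y)² ≤ ∫_D u_y² dxdy + ∫_D (u_{xy}² + u_{yy}²) dxdy + ∫_D u_{xyy}² dxdy. -/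
open MeasureTheory Real

lemma pdy_hasDerivAt {u : ℝ × ℝ → ℝ} (hu : ContDiff ℝ 1 u) (x y : ℝ) :
    HasDerivAt (fun t => u (x, t)) (pdy u (x, y)) y := by
  have : Differentiable ℝ (fun t => u (x, t)) :=
    (hu.comp (contDiff_const.prodMk contDiff_id)).differentiable (by norm_num)
  exact (this y).hasDerivAt

lemma pdx_hasDerivAt {u : ℝ × ℝ → ℝ} (hu : ContDiff ℝ 1 u) (x y : ℝ) :
    HasDerivAt (fun t => u (t, y)) (pdx u (x, y)) x := by
  have : Differentiable ℝ (fun t => u (t, y)) :=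
    (hu.comp (contDiff_id.prodMk contDiff_const)).differentiable (by norm_num)
  exact (this x).hasDerivAt

lemma pdy_contDiff {u : ℝ × ℝ → ℝ} (n : ℕ) (hu : ContDiff ℝ (n + 1) u) :
    ContDiff ℝ n (pdy u) := by
  have h1 : ContDiff ℝ 1 u := hu.of_le (by exact_mod_cast Nat.le_add_left 1 n)
  have : pdy u = fun p => fderiv ℝ u p (0, 1) := by
    funext p
    have h2 : HasFDerivAt u (fderiv ℝ u p) (p.1, p.2) :=
      (h1.differentiable (by norm_num) p).hasFDerivAt
    have h3 : HasDerivAt (fun t : ℝ => (p.1, t)) ((0 : ℝ), (1 : ℝ)) p.2 :=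
      (hasDerivAt_const p.2 p.1).prodMk (hasDerivAt_id p.2)
    exact (h2.comp_hasDerivAt p.2 h3).deriv
  rw [this]
  exact (hu.fderiv_right le_rfl).clm_apply contDiff_const

lemma pdx_contDiff {u : ℝ × ℝ → ℝ} (n : ℕ) (hu : ContDiff ℝ (n + 1) u) :
    ContDiff ℝ n (pdx u) := by
  have h1 : ContDiff ℝ 1 u := hu.of_le (by exact_mod_cast Nat.le_add_left 1 n)
  have : pdx u = fun p => fderiv ℝ u p (1, 0) := by
    funext p
    have h2 : HasFDerivAt u (fderiv ℝ u p) (p.1, p.2) :=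
      (h1.differentiable (by norm_num) p).hasFDerivAt
    have h3 : HasDerivAt (fun t : ℝ => (t, p.2)) ((1 : ℝ), (0 : ℝ)) p.1 :=
      (hasDerivAt_id p.1).prodMk (hasDerivAt_const p.1 p.2)
    exact (h2.comp_hasDerivAt p.1 h3).deriv
  rw [this]
  exact (hu.fderiv_right le_rfl).clm_apply contDiff_const

lemma sq_1d {h h' : ℝ → ℝ} (hd : ∀ t, HasDerivAt h (h' t) t) (hc : Continuous h')
    {a b : ℝ} (hab : a ≤ b) :
    |h b ^ 2 - h a ^ 2| ≤ ∫ t in a..b, (h t ^ 2 + h' t ^ 2) := by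
  have hh : Continuous h := continuous_iff_continuousAt.2 fun t => (hd t).continuousAt
  have h1 : ∫ t in a..b, 2 * h t * h' t = h b ^ 2 - h a ^ 2 := by
    refine intervalIntegral.integral_eq_sub_of_hasDerivAt (f := fun t => h t ^ 2) (fun t _ => ?_)
      (Continuous.intervalIntegrable (by fun_prop) _ _)
    have h2 := (hd t).mul (hd t)
    have e1 : (fun t => h t ^ 2) = h * h := by funext s; simp [pow_two]
    have e2 : 2 * h t * h' t = h' t * h t + h t * h' t := by ring
    rw [e1, e2]
    exact h2
  rw [← h1, ← Real.norm_eq_abs]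
  refine intervalIntegral.norm_integral_le_of_norm_le hab (Filter.Eventually.of_forall ?_)
    (Continuous.intervalIntegrable (by fun_prop) _ _)
  intro t _
  rw [Real.norm_eq_abs, abs_le]
  constructor <;> nlinarith [sq_nonneg (h t + h' t), sq_nonneg (h t - h' t)]

/-- Sup-norm bound on the half-strip `D = (0,∞) × (0,L)` for the `y`-derivative
(third inequality of Proposition 3.3):
`sup_D u_y² ≤ ‖u_y‖² + ‖∇u_y‖² + ‖u_{xyy}‖²`. -/
theorem sup_square_y_deriv_halfstrip (L : ℝ) (hL : 0 < L)
    (D : Set (ℝ × ℝ)) (hD : D = Set.Ioi (0:ℝ) ×ˢ Set.Ioo 0 L)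
    (u : ℝ × ℝ → ℝ) (hu : ContDiff ℝ 3 u)
    (hbc : ∀ x ≥ (0:ℝ), u (x, 0) = 0 ∧ u (x, L) = 0)
    (hdec : DecaysUnif (pdy u) ∧ DecaysUnif (pdx (pdy u)) ∧ DecaysUnif (pdy (pdy u)) ∧
      DecaysUnif (pdx (pdx (pdy u))) ∧ DecaysUnif (pdx (pdy (pdy u))) ∧
        DecaysUnif (pdy (pdy (pdy u))))
    (hi1 : IntegrableOn (fun p => (pdy u p) ^ 2) D)
    (hi2 : IntegrableOn (fun p => (pdx (pdy u) p) ^ 2 + (pdy (pdy u) p) ^ 2) D)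
    (hi3 : IntegrableOn (fun p => (pdx (pdy (pdy u)) p) ^ 2) D) :
    ∀ p ∈ D,
      (pdy u p) ^ 2 ≤
        (∫ q in D, (pdy u q) ^ 2) +
          (∫ q in D, ((pdx (pdy u) q) ^ 2 + (pdy (pdy u) q) ^ 2)) +
            ∫ q in D, (pdx (pdy (pdy u)) q) ^ 2 := by
  subst hD
  have hv : ContDiff ℝ 2 (pdy u) := pdy_contDiff 2 (by exact_mod_cast hu)
  have hv1 : ContDiff ℝ 1 (pdy u) := hv.of_le (by norm_num)
  have hvy : ContDiff ℝ 1 (pdy (pdy u)) := pdy_contDiff 1 (by exact_mod_cast hv)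
  have hvx : ContDiff ℝ 1 (pdx (pdy u)) := pdx_contDiff 1 (by exact_mod_cast hv)
  have hvxy : Continuous (pdx (pdy (pdy u))) :=
    (pdx_contDiff 0 (by exact_mod_cast hvy)).continuous
  have hu1 : ContDiff ℝ 1 u := hu.of_le (by norm_num)
  obtain ⟨hdv, -, hdvy, -⟩ := hdec
  generalize hw : pdy u = v at *
  have cv := hv.continuous
  have cvy := hvy.continuous
  have cvx := hvx.continuous
  rintro ⟨x, y⟩ ⟨hx, hy⟩
  simp only [Set.mem_Ioi, Set.mem_Ioo] at hx hy
  have hi12 : IntegrableOn (fun p => v p ^ 2 + (pdx v p ^ 2 + pdy v p ^ 2))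
      (Set.Ioi (0:ℝ) ×ˢ Set.Ioo 0 L) := hi1.add hi2
  rw [← integral_add hi1 hi2, ← integral_add hi12 hi3]
  have hiF := (hi1.add hi2).add hi3
  set F : ℝ × ℝ → ℝ := fun q => v q ^ 2 + (pdx v q ^ 2 + pdy v q ^ 2) + pdx (pdy v) q ^ 2 with hF
  have hiF' : IntegrableOn F (Set.Ioi (0:ℝ) ×ˢ Set.Ioo 0 L) := hiF
  change _ ≤ ∫ q in Set.Ioi (0:ℝ) ×ˢ Set.Ioo 0 L, F q
  have cF : Continuous F := by fun_prop
  have F0 : ∀ q, 0 ≤ F q := fun q => by positivity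
  -- step 1
  have s1 : v (x, y) ^ 2 ≤ ∫ t in (0:ℝ)..L, (v (x, t) ^ 2 + pdy v (x, t) ^ 2) := by
    obtain ⟨z, hz, hz0⟩ : ∃ z ∈ Set.Ioo 0 L, v (x, z) = 0 := by
      obtain ⟨z, hz, h⟩ := exists_deriv_eq_zero (f := fun t => u (x, t)) hL
        (by have := hu.continuous; fun_prop)
        (by rw [(hbc x hx.le).1, (hbc x hx.le).2])
      exact ⟨z, hz, by rw [← hw]; exact h⟩
    have key : ∀ a b : ℝ, 0 ≤ a → a ≤ b → b ≤ L → |v (x, b) ^ 2 - v (x, a) ^ 2| ≤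
        ∫ t in (0:ℝ)..L, (v (x, t) ^ 2 + pdy v (x, t) ^ 2) := by
      intro a b ha hab hb
      refine (sq_1d (h := fun t => v (x, t)) (h' := fun t => pdy v (x, t))
        (fun t => pdy_hasDerivAt hv1 x t) (by fun_prop) hab).trans ?_
      refine intervalIntegral.integral_mono_interval ha hab hb
        (Filter.Eventually.of_forall fun t => by positivity)
        (Continuous.intervalIntegrable (by fun_prop) _ _)
    rcases le_total z y with h | h
    · have := key z y hz.1.le h hy.2.le
      rw [hz0] at this
      simpa using (le_abs_self _).trans this
    · have := key y z hy.1.le h hz.2.le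
      rw [hz0, abs_sub_comm] at this
      simpa using (le_abs_self _).trans this
  refine s1.trans (le_of_forall_pos_le_add fun ε hε => ?_)
  -- choose M
  obtain ⟨δ, hδ, hδε⟩ : ∃ δ > 0, L * (δ ^ 2 + δ ^ 2) ≤ ε := by
    refine ⟨√(ε / (2 * L)), by positivity, ?_⟩
    rw [Real.sq_sqrt (by positivity)]
    apply le_of_eq; field_simp; ring
  obtain ⟨M1, hM1⟩ := hdv δ hδ
  obtain ⟨M2, hM2⟩ := hdvy δ hδ
  obtain ⟨M, hMx, hM1', hM2'⟩ : ∃ M, x ≤ M ∧ M1 ≤ M ∧ M2 ≤ M :=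
    ⟨max x (max M1 M2), by simp, by simp, by simp⟩
  have cG : Continuous (fun t => ∫ s in x..M, F (s, t)) :=
    intervalIntegral.continuous_parametric_intervalIntegral_of_continuous' 
      (f := fun t s => F (s, t)) (by simp only [Function.uncurry_def]; fun_prop) _ _
  have pt : ∀ t, v (x, t) ^ 2 + pdy v (x, t) ^ 2 ≤ (δ ^ 2 + δ ^ 2) + ∫ s in x..M, F (s, t) := by
    intro t
    have a1 := (abs_le.1 (sq_1d (h := fun s => v (s, t)) (h' := fun s => pdx v (s, t))
      (fun s => pdx_hasDerivAt hv1 s t) (by fun_prop) hMx)).1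
    have a2 := (abs_le.1 (sq_1d (h := fun s => pdy v (s, t)) (h' := fun s => pdx (pdy v) (s, t))
      (fun s => pdx_hasDerivAt hvy s t) (by fun_prop) hMx)).1
    have e : ∫ s in x..M, F (s, t) = (∫ s in x..M, (v (s, t) ^ 2 + pdx v (s, t) ^ 2)) +
        ∫ s in x..M, (pdy v (s, t) ^ 2 + pdx (pdy v) (s, t) ^ 2) := by
      rw [← intervalIntegral.integral_add
        (Continuous.intervalIntegrable (by fun_prop) _ _)
        (Continuous.intervalIntegrable (by fun_prop) _ _)]
      congr 1; funext s; simp only [hF]; ring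
    have b1 := sq_le_sq' (abs_le.1 (hM1 M hM1' t)).1 (abs_le.1 (hM1 M hM1' t)).2
    have b2 := sq_le_sq' (abs_le.1 (hM2 M hM2' t)).1 (abs_le.1 (hM2 M hM2' t)).2
    rw [e]; linarith
  have s2 : ∫ t in (0:ℝ)..L, (v (x, t) ^ 2 + pdy v (x, t) ^ 2) ≤
      ∫ t in (0:ℝ)..L, ((δ ^ 2 + δ ^ 2) + ∫ s in x..M, F (s, t)) :=
    intervalIntegral.integral_mono_on hL.le (Continuous.intervalIntegrable (by fun_prop) _ _)
      (Continuous.intervalIntegrable (by fun_prop) _ _) (fun t _ => pt t)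
  rw [intervalIntegral.integral_add (f := fun _ => δ ^ 2 + δ ^ 2) (Continuous.intervalIntegrable (by fun_prop) _ _)
      (Continuous.intervalIntegrable (by fun_prop) _ _), intervalIntegral.integral_const,
      sub_zero, smul_eq_mul] at s2
  have hsub : Set.Ioc x M ×ˢ Set.Ioo 0 L ⊆ Set.Ioi (0:ℝ) ×ˢ Set.Ioo 0 L :=
    Set.prod_mono (fun s hs => hx.trans hs.1) subset_rfl
  have s3 : ∫ t in (0:ℝ)..L, ∫ s in x..M, F (s, t) = ∫ q in Set.Ioc x M ×ˢ Set.Ioo 0 L, F q := by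
    have hi := hiF'.mono_set hsub
    rw [IntegrableOn, Measure.volume_eq_prod, ← Measure.prod_restrict] at hi
    rw [Measure.volume_eq_prod, ← Measure.prod_restrict, integral_prod_symm _ hi,
      intervalIntegral.integral_of_le hL.le, integral_Ioc_eq_integral_Ioo]
    simp only [intervalIntegral.integral_of_le hMx]
  have s4 : ∫ q in Set.Ioc x M ×ˢ Set.Ioo 0 L, F q ≤ ∫ q in Set.Ioi (0:ℝ) ×ˢ Set.Ioo 0 L, F q :=
    setIntegral_mono_set hiF' (Filter.Eventually.of_forall F0) hsub.eventuallyLE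
  linarith
end

section
/- Let L > 0, T > 0, α ∈ {0,1}, and D = (0,∞) × (0,L). Let u : [0,T] × ℝ² → ℝ be smooth and satisfy the 2D Kawahara equation u_t + α u_x + u u_x + u_{xxx} + u_{xyy} − u_{xxxxx} = 0 on [0,T] × D, with boundary conditions u(t,0,y) = u_x(t,0,y) = 0 for y ∈ (0,L) and u(t,x,0) = u(t,x,L) = 0 for x > 0, and suppose that u and all its spatial partial derivatives up to order five tend to 0 as x → ∞ uniformly in y and t and are square-integrable over D uniformly in t. Then for every t ∈ [0,T], ∫_D u(t,x,y)² dxdy + ∫₀^t ∫₀^L u_{xx}(s,0,y)² dy ds = ∫_D u(0,x,y)² dxdy. In particular, ∫_D u(t)² dxdy ≤ ∫_D u(0)² dxdy for all t ∈ [0,T]. -/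
open MeasureTheory Real

/-- Mixed spatial partial derivative `∂_x^i ∂_y^j`. -/
noncomputable def pd (i j : ℕ) (u : ℝ × ℝ → ℝ) : ℝ × ℝ → ℝ :=
  pdx^[i] (pdy^[j] u)

lemma kw_contDiff_pdx (f : ℝ → ℝ × ℝ → ℝ) (hf : ContDiff ℝ (⊤ : ℕ∞) (Function.uncurry f)) :
    ContDiff ℝ (⊤ : ℕ∞) (Function.uncurry (fun t => pdx (f t))) := by
  have h : Function.uncurry (fun t => pdx (f t)) =
      fun q : ℝ × ℝ × ℝ => fderiv ℝ (Function.uncurry f) q (0, 1, 0) := by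
    funext q
    obtain ⟨t, x, y⟩ := q
    have h1 : HasFDerivAt (Function.uncurry f) (fderiv ℝ (Function.uncurry f) (t, x, y)) (t, x, y) :=
      (hf.differentiable (by simp) _).hasFDerivAt
    have h2 : HasDerivAt (fun x : ℝ => (t, x, y)) ((0 : ℝ), (1 : ℝ), (0 : ℝ)) x :=
      (hasDerivAt_const x t).prodMk ((hasDerivAt_id x).prodMk (hasDerivAt_const x y))
    exact (h1.comp_hasDerivAt x h2).deriv
  rw [h]
  exact (hf.fderiv_right (m := (⊤ : ℕ∞)) (by simp)).clm_apply contDiff_const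

lemma kw_contDiff_pdy (f : ℝ → ℝ × ℝ → ℝ) (hf : ContDiff ℝ (⊤ : ℕ∞) (Function.uncurry f)) :
    ContDiff ℝ (⊤ : ℕ∞) (Function.uncurry (fun t => pdy (f t))) := by
  have h : Function.uncurry (fun t => pdy (f t)) =
      fun q : ℝ × ℝ × ℝ => fderiv ℝ (Function.uncurry f) q (0, 0, 1) := by
    funext q
    obtain ⟨t, x, y⟩ := q
    have h1 : HasFDerivAt (Function.uncurry f) (fderiv ℝ (Function.uncurry f) (t, x, y)) (t, x, y) :=
      (hf.differentiable (by simp) _).hasFDerivAt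
    have h2 : HasDerivAt (fun y : ℝ => (t, x, y)) ((0 : ℝ), (0 : ℝ), (1 : ℝ)) y :=
      (hasDerivAt_const y t).prodMk ((hasDerivAt_const y x).prodMk (hasDerivAt_id y))
    exact (h1.comp_hasDerivAt y h2).deriv
  rw [h]
  exact (hf.fderiv_right (m := (⊤ : ℕ∞)) (by simp)).clm_apply contDiff_const

lemma kw_contDiff_dt (f : ℝ → ℝ × ℝ → ℝ) (hf : ContDiff ℝ (⊤ : ℕ∞) (Function.uncurry f)) :
    ContDiff ℝ (⊤ : ℕ∞) (fun q : ℝ × ℝ × ℝ => deriv (fun s => f s q.2) q.1) := by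
  have h : (fun q : ℝ × ℝ × ℝ => deriv (fun s => f s q.2) q.1) =
      fun q : ℝ × ℝ × ℝ => fderiv ℝ (Function.uncurry f) q (1, 0) := by
    funext q
    obtain ⟨t, p⟩ := q
    have h1 : HasFDerivAt (Function.uncurry f) (fderiv ℝ (Function.uncurry f) (t, p)) (t, p) :=
      (hf.differentiable (by simp) _).hasFDerivAt
    have h2 : HasDerivAt (fun t : ℝ => (t, p)) ((1 : ℝ), (0 : ℝ × ℝ)) t :=
      (hasDerivAt_id t).prodMk (hasDerivAt_const t p)
    exact (h1.comp_hasDerivAt t h2).deriv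
  rw [h]
  exact (hf.fderiv_right (m := (⊤ : ℕ∞)) (by simp)).clm_apply contDiff_const

lemma kw_contDiff_pd (i j : ℕ) (f : ℝ → ℝ × ℝ → ℝ)
    (hf : ContDiff ℝ (⊤ : ℕ∞) (Function.uncurry f)) :
    ContDiff ℝ (⊤ : ℕ∞) (Function.uncurry (fun t => pd i j (f t))) := by
  have hj : ContDiff ℝ (⊤ : ℕ∞) (Function.uncurry (fun t => pdy^[j] (f t))) := by
    induction j with
    | zero => simpa using hf
    | succ k ih =>
      simp only [Function.iterate_succ_apply']
      exact kw_contDiff_pdy _ ih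
  unfold pd
  induction i with
  | zero => simpa using hj
  | succ k ih =>
    simp only [Function.iterate_succ_apply']
    exact kw_contDiff_pdx _ ih

lemma kw_slice (f : ℝ → ℝ × ℝ → ℝ) (hf : ContDiff ℝ (⊤ : ℕ∞) (Function.uncurry f)) (t : ℝ) :
    ContDiff ℝ (⊤ : ℕ∞) (f t) :=
  hf.comp (contDiff_const.prodMk contDiff_id)

lemma kw_contDiff_pd' (i j : ℕ) (v : ℝ × ℝ → ℝ) (hv : ContDiff ℝ (⊤ : ℕ∞) v) :
    ContDiff ℝ (⊤ : ℕ∞) (pd i j v) :=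
  kw_slice (fun _ => pd i j v) (kw_contDiff_pd i j (fun _ => v) (hv.comp contDiff_snd)) 0

lemma kw_hasDerivAt_x (v : ℝ × ℝ → ℝ) (hv : ContDiff ℝ (⊤ : ℕ∞) v) (x y : ℝ) :
    HasDerivAt (fun x => v (x, y)) (pdx v (x, y)) x := by
  have h : ContDiff ℝ (⊤ : ℕ∞) (fun x => v (x, y)) := hv.comp (contDiff_id.prodMk contDiff_const)
  exact (h.differentiable (by simp) x).hasDerivAt

lemma kw_hasDerivAt_y (v : ℝ × ℝ → ℝ) (hv : ContDiff ℝ (⊤ : ℕ∞) v) (x y : ℝ) :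
    HasDerivAt (fun y => v (x, y)) (pdy v (x, y)) y := by
  have h : ContDiff ℝ (⊤ : ℕ∞) (fun y => v (x, y)) := hv.comp (contDiff_const.prodMk contDiff_id)
  exact (h.differentiable (by simp) y).hasDerivAt

lemma kw_pdx_eq (v : ℝ × ℝ → ℝ) (hv : Differentiable ℝ v) :
    pdx v = fun p => fderiv ℝ v p (1, 0) := by
  funext p
  obtain ⟨x, y⟩ := p
  have h2 : HasDerivAt (fun x : ℝ => (x, y)) ((1 : ℝ), (0 : ℝ)) x :=
    (hasDerivAt_id x).prodMk (hasDerivAt_const x y)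
  exact ((hv (x, y)).hasFDerivAt.comp_hasDerivAt x h2).deriv

lemma kw_pdy_eq (v : ℝ × ℝ → ℝ) (hv : Differentiable ℝ v) :
    pdy v = fun p => fderiv ℝ v p (0, 1) := by
  funext p
  obtain ⟨x, y⟩ := p
  have h2 : HasDerivAt (fun y : ℝ => (x, y)) ((0 : ℝ), (1 : ℝ)) y :=
    (hasDerivAt_const y x).prodMk (hasDerivAt_id y)
  exact ((hv (x, y)).hasFDerivAt.comp_hasDerivAt y h2).deriv

lemma kw_comm (v : ℝ × ℝ → ℝ) (hv : ContDiff ℝ (⊤ : ℕ∞) v) : pdy (pdx v) = pdx (pdy v) := by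
  have hd : Differentiable ℝ v := hv.differentiable (by simp)
  have hd2 : Differentiable ℝ (fderiv ℝ v) :=
    (hv.fderiv_right (m := (⊤ : ℕ∞)) (by simp)).differentiable (by simp)
  rw [kw_pdx_eq v hd, kw_pdy_eq v hd, kw_pdy_eq _ (hd2.clm_apply (differentiable_const _)),
    kw_pdx_eq _ (hd2.clm_apply (differentiable_const _))]
  funext p
  have hs : IsSymmSndFDerivAt ℝ v p := hv.contDiffAt.isSymmSndFDerivAt (by
    simp only [minSmoothness_of_isRCLikeNormedField]
    exact WithTop.coe_le_coe.2 (le_top : (2 : ℕ∞) ≤ ⊤))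
  rw [fderiv_clm_apply (hd2 p) (differentiableAt_const _),
    fderiv_clm_apply (hd2 p) (differentiableAt_const _)]
  simpa using hs (0, 1) (1, 0)

/-- The `x`-flux. -/
noncomputable def kwFlux (α : ℝ) (v : ℝ × ℝ → ℝ) (p : ℝ × ℝ) : ℝ :=
  α * v p ^ 2 + 2 / 3 * v p ^ 3 + 2 * (v p * pd 2 0 v p) - pd 1 0 v p ^ 2 - pd 0 1 v p ^ 2
    - 2 * (v p * pd 4 0 v p - pd 1 0 v p * pd 3 0 v p) - pd 2 0 v p ^ 2

lemma kw_swap (F : ℝ → ℝ → ℝ) (hF : Continuous (Function.uncurry F)) (a b c d : ℝ) :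
    ∫ x in a..b, ∫ y in c..d, F x y = ∫ y in c..d, ∫ x in a..b, F x y := by
  apply intervalIntegral_intervalIntegral_swap
  have : IntegrableOn (Function.uncurry F) (Set.uIcc a b ×ˢ Set.uIcc c d) :=
    hF.continuousOn.integrableOn_compact (isCompact_uIcc.prod isCompact_uIcc)
  exact this.mono_set (Set.prod_mono Set.uIoc_subset_uIcc Set.uIoc_subset_uIcc)

lemma kw_flux_deriv (α : ℝ) (v : ℝ × ℝ → ℝ) (hv : ContDiff ℝ (⊤ : ℕ∞) v) (x y : ℝ) :
    HasDerivAt (fun x => kwFlux α v (x, y))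
      (2 * α * v (x, y) * pdx v (x, y) + 2 * v (x, y) ^ 2 * pdx v (x, y)
        + 2 * v (x, y) * pd 3 0 v (x, y) - 2 * pd 0 1 v (x, y) * pd 1 1 v (x, y)
        - 2 * v (x, y) * pd 5 0 v (x, y)) x := by
  have h (i j : ℕ) : HasDerivAt (fun x => pd i j v (x, y)) (pd (i+1) j v (x, y)) x := by
    have := kw_hasDerivAt_x (pd i j v) (kw_contDiff_pd' i j v hv) x y
    convert this using 1
    simp only [pd, Function.iterate_succ_apply']
  have h00 : HasDerivAt (fun x => v (x, y)) (pd 1 0 v (x, y)) x := h 0 0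
  have e : pdx v (x, y) = pd 1 0 v (x, y) := rfl
  rw [e]
  unfold kwFlux
  have := (((((((h00.pow 2).const_mul α).add ((h00.pow 3).const_mul (2/3))).add
    ((h00.mul (h 2 0)).const_mul 2)).sub ((h 1 0).pow 2)).sub ((h 0 1).pow 2)).sub
    (((h00.mul (h 4 0)).sub ((h 1 0).mul (h 3 0))).const_mul 2)).sub ((h 2 0).pow 2)
  refine this.congr_deriv ?_
  simp
  ring

lemma kw_G_deriv (v : ℝ × ℝ → ℝ) (hv : ContDiff ℝ (⊤ : ℕ∞) v) (x y : ℝ) :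
    HasDerivAt (fun y => 2 * (v (x, y) * pd 1 1 v (x, y)))
      (2 * pd 0 1 v (x, y) * pd 1 1 v (x, y) + 2 * v (x, y) * pd 1 2 v (x, y)) y := by
  have h1 : HasDerivAt (fun y => v (x, y)) (pd 0 1 v (x, y)) y := kw_hasDerivAt_y v hv x y
  have h2 : HasDerivAt (fun y => pd 1 1 v (x, y)) (pd 1 2 v (x, y)) y := by
    have := kw_hasDerivAt_y (pd 1 1 v) (kw_contDiff_pd' 1 1 v hv) x y
    convert this using 1
    have hc := kw_comm (pd 0 1 v) (kw_contDiff_pd' 0 1 v hv)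
    exact (congrFun hc (x, y)).symm
  refine ((h1.mul h2).const_mul 2).congr_deriv ?_
  ring

lemma kw_spatial (L α : ℝ) (hL : 0 < L) (v w : ℝ × ℝ → ℝ) (hv : ContDiff ℝ (⊤ : ℕ∞) v)
    (hw : Continuous w)
    (heq : ∀ p ∈ Set.Ioi (0:ℝ) ×ˢ Set.Ioo 0 L,
      w p + α * pdx v p + v p * pdx v p + pd 3 0 v p + pd 1 2 v p - pd 5 0 v p = 0)
    (hbc1 : ∀ y ∈ Set.Ioo (0:ℝ) L, v (0, y) = 0 ∧ pdx v (0, y) = 0)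
    (hbc2 : ∀ x > (0:ℝ), v (x, 0) = 0 ∧ v (x, L) = 0) (R : ℝ) (hR : 0 ≤ R) :
    ∫ x in (0:ℝ)..R, ∫ y in (0:ℝ)..L, 2 * v (x, y) * w (x, y) =
      - (∫ y in (0:ℝ)..L, kwFlux α v (R, y)) - ∫ y in (0:ℝ)..L, pd 2 0 v (0, y) ^ 2 := by
  have hc (i j : ℕ) : Continuous (pd i j v) := (kw_contDiff_pd' i j v hv).continuous
  have hvc : Continuous v := hv.continuous
  have hxc : Continuous (pdx v) := hc 1 0
  have hclI : closure (Set.Ioo 0 L) = Set.Icc 0 L := closure_Ioo hL.ne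
  -- closure versions
  have heq' : ∀ p ∈ Set.Ici (0:ℝ) ×ˢ Set.Icc 0 L,
      w p + α * pdx v p + v p * pdx v p + pd 3 0 v p + pd 1 2 v p - pd 5 0 v p = 0 := by
    have h3 := hc 3 0
    have h12 := hc 1 2
    have h5 := hc 5 0
    have := Set.EqOn.closure (f := fun p => w p + α * pdx v p + v p * pdx v p + pd 3 0 v p
      + pd 1 2 v p - pd 5 0 v p) (g := fun _ => 0) heq (by fun_prop) continuous_const
    rwa [closure_prod_eq, closure_Ioi, hclI] at this
  have hb0 : ∀ y ∈ Set.Icc (0:ℝ) L, v (0, y) = 0 := by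
    have := Set.EqOn.closure (f := fun y => v (0, y)) (g := fun _ => 0)
      (fun y hy => (hbc1 y hy).1) (by fun_prop) continuous_const
    rwa [hclI] at this
  have hb1 : ∀ y ∈ Set.Icc (0:ℝ) L, pd 1 0 v (0, y) = 0 := by
    have := Set.EqOn.closure (f := fun y => pdx v (0, y)) (g := fun _ => 0)
      (fun y hy => (hbc1 y hy).2) (by fun_prop) continuous_const
    rwa [hclI] at this
  have hby : ∀ y ∈ Set.Icc (0:ℝ) L, pd 0 1 v (0, y) = 0 := by
    have h01 := hc 0 1
    have := Set.EqOn.closure (s := Set.Ioo 0 L) (f := fun y => pd 0 1 v (0, y)) (g := fun _ => 0)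
      (fun y hy => by
        have h : (fun y => v (0, y)) =ᶠ[nhds y] fun _ => 0 := by
          filter_upwards [isOpen_Ioo.mem_nhds hy] with z hz using (hbc1 z hz).1
        have := h.deriv_eq
        simpa [pd, pdy] using this) (by fun_prop) continuous_const
    rwa [hclI] at this
  have hbx0 : ∀ x ∈ Set.Ici (0:ℝ), v (x, 0) = 0 := by
    have := Set.EqOn.closure (s := Set.Ioi 0) (f := fun x => v (x, 0)) (g := fun _ => 0)
      (fun x hx => (hbc2 x hx).1) (by fun_prop) continuous_const
    rwa [closure_Ioi] at this
  have hbxL : ∀ x ∈ Set.Ici (0:ℝ), v (x, L) = 0 := by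
    have := Set.EqOn.closure (s := Set.Ioi 0) (f := fun x => v (x, L)) (g := fun _ => 0)
      (fun x hx => (hbc2 x hx).2) (by fun_prop) continuous_const
    rwa [closure_Ioi] at this
  -- the fluxes
  set Fx : ℝ × ℝ → ℝ := fun p => 2 * α * v p * pdx v p + 2 * v p ^ 2 * pdx v p
        + 2 * v p * pd 3 0 v p - 2 * pd 0 1 v p * pd 1 1 v p - 2 * v p * pd 5 0 v p with hFx
  set Gy : ℝ × ℝ → ℝ := fun p => 2 * pd 0 1 v p * pd 1 1 v p + 2 * v p * pd 1 2 v p with hGy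
  have hFxc : Continuous Fx := by
    have h3 := hc 3 0
    have h01 := hc 0 1
    have h11 := hc 1 1
    have h5 := hc 5 0
    fun_prop
  have hGyc : Continuous Gy := by
    have h01 := hc 0 1
    have h11 := hc 1 1
    have h12 := hc 1 2
    fun_prop
  have hflc : Continuous (kwFlux α v) := by
    have h3 := hc 3 0
    have h01 := hc 0 1
    have h10 := hc 1 0
    have h20 := hc 2 0
    have h4 := hc 4 0
    unfold kwFlux
    fun_prop
  have h20 := hc 2 0
  have hG : ∀ x ∈ Set.Ici (0:ℝ), ∫ y in (0:ℝ)..L, Gy (x, y) = 0 := by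
    intro x hx
    rw [intervalIntegral.integral_eq_sub_of_hasDerivAt
      (f := fun y => 2 * (v (x, y) * pd 1 1 v (x, y)))
      (fun y _ => kw_G_deriv v hv x y) (Continuous.intervalIntegrable (by fun_prop) _ _)]
    simp [hbx0 x hx, hbxL x hx]
  have hF : ∀ y ∈ Set.Icc (0:ℝ) L, ∫ x in (0:ℝ)..R, Fx (x, y) =
      kwFlux α v (R, y) + pd 2 0 v (0, y) ^ 2 := by
    intro y hy
    rw [intervalIntegral.integral_eq_sub_of_hasDerivAt
      (f := fun x => kwFlux α v (x, y))
      (fun x _ => kw_flux_deriv α v hv x y) (Continuous.intervalIntegrable (by fun_prop) _ _)]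
    have : kwFlux α v (0, y) = - pd 2 0 v (0, y) ^ 2 := by
      simp [kwFlux, hb0 y hy, hb1 y hy, hby y hy]
    rw [this]
    ring
  have h1 : ∫ x in (0:ℝ)..R, ∫ y in (0:ℝ)..L, 2 * v (x, y) * w (x, y) =
      ∫ x in (0:ℝ)..R, - ∫ y in (0:ℝ)..L, Fx (x, y) := by
    apply intervalIntegral.integral_congr
    intro x hx
    rw [Set.uIcc_of_le hR] at hx
    have hx0 : x ∈ Set.Ici (0:ℝ) := hx.1
    have : ∫ y in (0:ℝ)..L, 2 * v (x, y) * w (x, y) =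
        ∫ y in (0:ℝ)..L, (- Fx (x, y) - Gy (x, y)) := by
      apply intervalIntegral.integral_congr
      intro y hy
      rw [Set.uIcc_of_le hL.le] at hy
      have := heq' (x, y) ⟨hx0, hy⟩
      simp only [hFx, hGy]
      linear_combination 2 * v (x, y) * this
    simp only
    rw [this, intervalIntegral.integral_sub (Continuous.intervalIntegrable (by fun_prop) _ _)
      (Continuous.intervalIntegrable (by fun_prop) _ _), hG x hx0, intervalIntegral.integral_neg]
    ring
  rw [h1, intervalIntegral.integral_neg, kw_swap (fun x y => Fx (x, y)) hFxc]
  have h2 : ∫ y in (0:ℝ)..L, ∫ x in (0:ℝ)..R, Fx (x, y) =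
      ∫ y in (0:ℝ)..L, (kwFlux α v (R, y) + pd 2 0 v (0, y) ^ 2) := by
    apply intervalIntegral.integral_congr
    intro y hy
    rw [Set.uIcc_of_le hL.le] at hy
    exact hF y hy
  rw [h2, intervalIntegral.integral_add (Continuous.intervalIntegrable (by fun_prop) _ _)
      (Continuous.intervalIntegrable (by fun_prop) _ _)]
  ring

lemma kw_flux_bound (α : ℝ) (hα : α = 0 ∨ α = 1) (v : ℝ × ℝ → ℝ) (p : ℝ × ℝ) (ε : ℝ)
    (hε : 0 < ε) (hε1 : ε ≤ 1) (h : ∀ i j : ℕ, i + j ≤ 5 → |pd i j v p| ≤ ε) :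
    |kwFlux α v p| ≤ 11 * ε := by
  have h00 : |v p| ≤ ε := h 0 0 (by norm_num)
  have h10 := h 1 0 (by norm_num)
  have h01 := h 0 1 (by norm_num)
  have h20 := h 2 0 (by norm_num)
  have h30 := h 3 0 (by norm_num)
  have h40 := h 4 0 (by norm_num)
  have key : ∀ a b : ℝ, |a| ≤ ε → |b| ≤ ε → |a * b| ≤ ε := by
    intro a b ha hb
    rw [abs_mul]
    nlinarith [abs_nonneg a, abs_nonneg b]
  have k1 := key _ _ h00 h00
  have k2 := key _ _ h00 k1
  have k3 := key _ _ h00 h20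
  have k4 := key _ _ h10 h10
  have k5 := key _ _ h01 h01
  have k6 := key _ _ h00 h40
  have k7 := key _ _ h10 h30
  have k8 := key _ _ h20 h20
  unfold kwFlux
  rw [abs_le] at *
  simp only [pow_succ, pow_zero, one_mul, mul_assoc]
  rcases hα with rfl | rfl <;> constructor <;> linarith [k1.1, k1.2, k2.1, k2.2, k3.1, k3.2, k4.1,
    k4.2, k5.1, k5.2, k6.1, k6.2, k7.1, k7.2, k8.1, k8.2]

lemma kw_lim (L : ℝ) (hL : 0 < L) (f : ℝ × ℝ → ℝ)
    (hf : IntegrableOn f (Set.Ioi (0:ℝ) ×ˢ Set.Ioo 0 L)) :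
    Filter.Tendsto (fun R : ℝ => ∫ x in (0:ℝ)..R, ∫ y in (0:ℝ)..L, f (x, y)) Filter.atTop
      (nhds (∫ p in Set.Ioi (0:ℝ) ×ˢ Set.Ioo 0 L, f p)) := by
  have hf' : IntegrableOn f (Set.Ioi (0:ℝ) ×ˢ Set.Ioo 0 L) (volume.prod volume) := hf
  have e := setIntegral_prod f hf'
  rw [← Measure.volume_eq_prod] at e
  rw [e]
  have e2 : ∀ x, ∫ y in (0:ℝ)..L, f (x, y) = ∫ y in Set.Ioo 0 L, f (x, y) := by
    intro x
    rw [intervalIntegral.integral_of_le hL.le, integral_Ioc_eq_integral_Ioo]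
  simp only [e2]
  apply intervalIntegral_tendsto_integral_Ioi _ _ Filter.tendsto_id
  rw [IntegrableOn, ← Measure.prod_restrict] at hf'
  exact hf'.integral_prod_left

lemma kw_time (u : ℝ → ℝ × ℝ → ℝ) (hu : ContDiff ℝ (⊤ : ℕ∞) (Function.uncurry u))
    (L R t : ℝ) :
    (∫ x in (0:ℝ)..R, ∫ y in (0:ℝ)..L, u t (x, y) ^ 2)
      - (∫ x in (0:ℝ)..R, ∫ y in (0:ℝ)..L, u 0 (x, y) ^ 2) =
    ∫ s in (0:ℝ)..t, ∫ x in (0:ℝ)..R, ∫ y in (0:ℝ)..L,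
      2 * u s (x, y) * deriv (fun s => u s (x, y)) s := by
  set W : ℝ × ℝ × ℝ → ℝ := fun q => 2 * u q.1 q.2 * deriv (fun s => u s q.2) q.1 with hW
  have huc : Continuous (fun q : ℝ × ℝ × ℝ => u q.1 q.2) := hu.continuous
  have hWc : Continuous W := by
    have h1 := (kw_contDiff_dt u hu).continuous
    exact (continuous_const.mul huc).mul h1
  have hus (s : ℝ) : Continuous (u s) := (kw_slice u hu s).continuous
  have ftc (p : ℝ × ℝ) : ∫ s in (0:ℝ)..t, W (s, p) = u t p ^ 2 - u 0 p ^ 2 := by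
    apply intervalIntegral.integral_eq_sub_of_hasDerivAt (f := fun s => u s p ^ 2)
    · intro s _
      have hd : ContDiff ℝ (⊤ : ℕ∞) (fun s => u s p) :=
        hu.comp (contDiff_id.prodMk contDiff_const)
      have := ((hd.differentiable (by simp) s).hasDerivAt).pow 2
      refine this.congr_deriv ?_
      simp [hW]
    · exact Continuous.intervalIntegrable (by fun_prop) _ _
  change _ = ∫ s in (0:ℝ)..t, ∫ x in (0:ℝ)..R, ∫ y in (0:ℝ)..L, W (s, x, y)
  rw [kw_swap (fun s x => ∫ y in (0:ℝ)..L, W (s, x, y)), ← intervalIntegral.integral_sub]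
  · apply intervalIntegral.integral_congr
    intro x _
    simp only
    rw [kw_swap (fun s y => W (s, x, y)) (by fun_prop), ← intervalIntegral.integral_sub]
    · simp only [ftc]
    all_goals
      have := hus t
      have := hus 0
      exact Continuous.intervalIntegrable (by fun_prop) _ _
  · have := hus t
    exact Continuous.intervalIntegrable (by fun_prop) _ _
  · have := hus 0
    exact Continuous.intervalIntegrable (by fun_prop) _ _
  · simp only [Function.uncurry_def]
    fun_prop

/-- L² energy identity for regular solutions of the 2D Kawahara equation on the
half-strip `D = (0,∞) × (0,L)` (Estimate I / identity (6.2)):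
`∫_D u(t)² + ∫₀^t ∫₀^L u_{xx}(s,0,y)² dy ds = ∫_D u(0)²`, and in particular
`∫_D u(t)² ≤ ∫_D u(0)²`. -/
theorem kawahara_L2_identity (L T α : ℝ) (hL : 0 < L) (hT : 0 < T)
    (hα : α = 0 ∨ α = 1)
    (D : Set (ℝ × ℝ)) (hD : D = Set.Ioi (0:ℝ) ×ˢ Set.Ioo 0 L)
    (u : ℝ → ℝ × ℝ → ℝ)
    (hu : ContDiff ℝ (⊤ : ℕ∞) (Function.uncurry u))
    (heq : ∀ t ∈ Set.Icc (0:ℝ) T, ∀ p ∈ D,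
      deriv (fun s => u s p) t + α * pdx (u t) p + u t p * pdx (u t) p +
        pd 3 0 (u t) p + pd 1 2 (u t) p - pd 5 0 (u t) p = 0)
    (hbc1 : ∀ t ∈ Set.Icc (0:ℝ) T, ∀ y ∈ Set.Ioo (0:ℝ) L,
      u t (0, y) = 0 ∧ pdx (u t) (0, y) = 0)
    (hbc2 : ∀ t ∈ Set.Icc (0:ℝ) T, ∀ x > (0:ℝ),
      u t (x, 0) = 0 ∧ u t (x, L) = 0)
    (hdec : ∀ i j : ℕ, i + j ≤ 5 →
      ∀ ε > 0, ∃ M : ℝ, ∀ x ≥ M, ∀ y : ℝ, ∀ t ∈ Set.Icc (0:ℝ) T,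
        |pd i j (u t) (x, y)| ≤ ε)
    (hint : ∀ i j : ℕ, i + j ≤ 5 →
      (∀ t ∈ Set.Icc (0:ℝ) T, IntegrableOn (fun p => (pd i j (u t) p) ^ 2) D) ∧
        ∃ C : ℝ, ∀ t ∈ Set.Icc (0:ℝ) T, (∫ p in D, (pd i j (u t) p) ^ 2) ≤ C) :
    ∀ t ∈ Set.Icc (0:ℝ) T,
      ((∫ p in D, (u t p) ^ 2) +
          ∫ s in (0:ℝ)..t, ∫ y in (0:ℝ)..L, (pd 2 0 (u s) (0, y)) ^ 2
        = ∫ p in D, (u 0 p) ^ 2) ∧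
      (∫ p in D, (u t p) ^ 2) ≤ ∫ p in D, (u 0 p) ^ 2 := by
  intro t ht
  subst hD
  have hlim (s : ℝ) (hs : s ∈ Set.Icc (0:ℝ) T) := kw_lim L hL (fun p => u s p ^ 2)
    ((hint 0 0 (by norm_num)).1 s hs)
  have h0 : (0:ℝ) ∈ Set.Icc (0:ℝ) T := ⟨le_rfl, hT.le⟩
  have hsub : ∀ s ∈ Set.uIcc 0 t, s ∈ Set.Icc (0:ℝ) T := by
    intro s hs
    rw [Set.uIcc_of_le ht.1] at hs
    exact ⟨hs.1, hs.2.trans ht.2⟩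
  set B := ∫ s in (0:ℝ)..t, ∫ y in (0:ℝ)..L, (pd 2 0 (u s) (0, y)) ^ 2 with hB
  have hc20 : Continuous (fun q : ℝ × ℝ × ℝ => pd 2 0 (u q.1) q.2) :=
    (kw_contDiff_pd 2 0 u hu).continuous
  have hfc : Continuous (fun q : ℝ × ℝ × ℝ => kwFlux α (u q.1) q.2) := by
    have hc (i j : ℕ) : Continuous (fun q : ℝ × ℝ × ℝ => pd i j (u q.1) q.2) :=
      (kw_contDiff_pd i j u hu).continuous
    have hc0 : Continuous (fun q : ℝ × ℝ × ℝ => u q.1 q.2) := hu.continuous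
    have h3 := hc 3 0
    have h01 := hc 0 1
    have h10 := hc 1 0
    have h4 := hc 4 0
    unfold kwFlux
    fun_prop
  have hid : ∀ R : ℝ, 0 ≤ R → (∫ x in (0:ℝ)..R, ∫ y in (0:ℝ)..L, u t (x, y) ^ 2)
      - (∫ x in (0:ℝ)..R, ∫ y in (0:ℝ)..L, u 0 (x, y) ^ 2) + B =
      - ∫ s in (0:ℝ)..t, ∫ y in (0:ℝ)..L, kwFlux α (u s) (R, y) := by
    intro R hR
    rw [kw_time u hu]
    have : ∫ s in (0:ℝ)..t, ∫ x in (0:ℝ)..R, ∫ y in (0:ℝ)..L,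
        2 * u s (x, y) * deriv (fun s => u s (x, y)) s =
        ∫ s in (0:ℝ)..t, (- (∫ y in (0:ℝ)..L, kwFlux α (u s) (R, y))
          - ∫ y in (0:ℝ)..L, pd 2 0 (u s) (0, y) ^ 2) := by
      apply intervalIntegral.integral_congr
      intro s hs
      have hs' := hsub s hs
      exact kw_spatial L α hL (u s) (fun p => deriv (fun s => u s p) s) (kw_slice u hu s)
        (kw_slice (fun t p => deriv (fun s => u s p) t) (kw_contDiff_dt u hu) s).continuous
        (heq s hs') (hbc1 s hs') (hbc2 s hs') R hR
    have c1 : Continuous (fun s => ∫ y in (0:ℝ)..L, kwFlux α (u s) (R, y)) :=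
      intervalIntegral.continuous_parametric_intervalIntegral_of_continuous'
        (f := fun s y => kwFlux α (u s) (R, y))
        (hfc.comp (g := fun q : ℝ × ℝ × ℝ => kwFlux α (u q.1) q.2)
          (f := fun q : ℝ × ℝ => (q.1, R, q.2)) (by fun_prop)) 0 L
    have c2 : Continuous (fun s => ∫ y in (0:ℝ)..L, pd 2 0 (u s) (0, y) ^ 2) :=
      intervalIntegral.continuous_parametric_intervalIntegral_of_continuous'
        (f := fun s y => pd 2 0 (u s) (0, y) ^ 2)
        (by
          have h : Continuous (fun q : ℝ × ℝ => pd 2 0 (u q.1) (0, q.2)) :=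
            hc20.comp (g := fun q : ℝ × ℝ × ℝ => pd 2 0 (u q.1) q.2)
              (f := fun q : ℝ × ℝ => (q.1, (0:ℝ), q.2)) (by fun_prop)
          simp only [Function.uncurry_def]
          exact h.pow 2) 0 L
    rw [this, intervalIntegral.integral_sub (Continuous.intervalIntegrable (by fun_prop) _ _)
      (c2.intervalIntegrable _ _), intervalIntegral.integral_neg]
    ring
  have hlimA := (((hlim t ht).sub (hlim 0 h0)).add_const B).abs
  set A := (∫ p in Set.Ioi (0:ℝ) ×ˢ Set.Ioo 0 L, u t p ^ 2)
    - (∫ p in Set.Ioi (0:ℝ) ×ˢ Set.Ioo 0 L, u 0 p ^ 2) + B with hA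
  have hbd : ∀ ε : ℝ, 0 < ε → ε ≤ 1 → |A| ≤ 11 * ε * L * t := by
    intro ε hε hε1
    choose! M hM using fun (i j : ℕ) (hij : i + j ≤ 5) => hdec i j hij ε hε
    have hM' : ∀ᶠ R : ℝ in Filter.atTop, ∀ i ∈ Finset.range 6, ∀ j ∈ Finset.range 6,
        M i j ≤ R := by
      simp only [Filter.eventually_all_finset]
      intro i _ j _
      exact Filter.eventually_ge_atTop _
    refine le_of_tendsto hlimA ?_
    filter_upwards [hM', Filter.eventually_ge_atTop 0] with R hR hR0
    rw [hid R hR0, abs_neg]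
    have hin : ∀ s ∈ Set.uIoc 0 t, ‖∫ y in (0:ℝ)..L, kwFlux α (u s) (R, y)‖ ≤ 11 * ε * L := by
      intro s hs
      have := intervalIntegral.norm_integral_le_of_norm_le_const (a := 0) (b := L)
        (f := fun y => kwFlux α (u s) (R, y)) (C := 11 * ε) (fun y _ => by
          refine kw_flux_bound α hα (u s) (R, y) ε hε hε1 (fun i j hij => ?_)
          exact hM i j hij R (hR i (Finset.mem_range.2 (by omega)) j
            (Finset.mem_range.2 (by omega))) y s (hsub s (Set.uIoc_subset_uIcc hs)))
      simpa [abs_of_pos hL] using this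
    have := intervalIntegral.norm_integral_le_of_norm_le_const hin
    simpa [abs_of_nonneg ht.1] using this
  have hA0 : A = 0 := by
    by_contra hne
    have hpos : 0 < |A| := abs_pos.2 hne
    have hK : 0 ≤ 11 * L * t := by have := ht.1; positivity
    have hq : 0 < |A| / (2 * (11 * L * t + 1)) := by positivity
    have h1 := hbd (min 1 (|A| / (2 * (11 * L * t + 1)))) (lt_min one_pos hq) (min_le_left _ _)
    have h2 : min 1 (|A| / (2 * (11 * L * t + 1))) * (11 * L * t) ≤
        |A| / (2 * (11 * L * t + 1)) * (11 * L * t) :=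
      mul_le_mul_of_nonneg_right (min_le_right _ _) hK
    have h3 : |A| / (2 * (11 * L * t + 1)) * (2 * (11 * L * t + 1)) = |A| := by
      field_simp
    nlinarith
  have hBnn : 0 ≤ B := intervalIntegral.integral_nonneg ht.1 fun s _ =>
    intervalIntegral.integral_nonneg hL.le fun y _ => sq_nonneg _
  constructor
  · linarith
  · linarith
end

section
/- Let L > 0, T > 0, and D = (0,∞) × (0,L). Let u : [0,T] × ℝ² → ℝ be smooth and satisfy u_t + u_x + u u_x + u_{xxx} + u_{xyy} − u_{xxxxx} = 0 on [0,T] × D, with boundary conditions u(t,0,y) = u_x(t,0,y) = 0 for y ∈ (0,L) and u(t,x,0) = u(t,x,L) = 0 for x > 0, and suppose that u and all its spatial partial derivatives up to order five tend to 0 as x → ∞ uniformly in y and t and are square-integrable over D uniformly in t. Then the functional E(t) = ∫_D (u_{xx}(t)² + u_x(t)² + u_y(t)²) dxdy − (1/3) ∫_D u(t)³ dxdy is nonincreasing in t; in particular E(t) ≤ E(0) for all t ∈ [0,T]. -/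
open MeasureTheory Real

noncomputable def Dd (w : ℝ × ℝ × ℝ) (f : ℝ × ℝ × ℝ → ℝ) : ℝ × ℝ × ℝ → ℝ :=
  fun q => fderiv ℝ f q w

noncomputable abbrev kDt := Dd (1, 0, 0)
noncomputable abbrev kDx := Dd (0, 1, 0)
noncomputable abbrev kDy := Dd (0, 0, 1)

abbrev Sm (f : ℝ × ℝ × ℝ → ℝ) : Prop := ContDiff ℝ (⊤ : ℕ∞) f

lemma Sm.Dd {f : ℝ × ℝ × ℝ → ℝ} (hf : Sm f) (w : ℝ × ℝ × ℝ) : Sm (Dd w f) := by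
  unfold Sm _root_.Dd
  have h : ContDiff ℝ (⊤ : ℕ∞) (fderiv ℝ f) := hf.fderiv_right (by simp)
  exact h.clm_apply contDiff_const

lemma Dd_comm {f : ℝ × ℝ × ℝ → ℝ} (hf : Sm f) (v w : ℝ × ℝ × ℝ) :
    Dd v (Dd w f) = Dd w (Dd v f) := by
  funext q
  have h : ContDiff ℝ (⊤ : ℕ∞) (fderiv ℝ f) := hf.fderiv_right (by simp)
  have hd : DifferentiableAt ℝ (fderiv ℝ f) q := (h.differentiable (by simp)) q
  have key : ∀ a b : ℝ × ℝ × ℝ, Dd a (Dd b f) q = fderiv ℝ (fderiv ℝ f) q a b := by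
    intro a b
    unfold Dd
    have := (hd.hasFDerivAt.clm_apply (hasFDerivAt_const b q)).fderiv
    rw [this]; simp
  rw [key, key]
  have hs : IsSymmSndFDerivAt ℝ f q :=
    (hf.contDiffAt).isSymmSndFDerivAt (by simpa using (WithTop.coe_le_coe.2 (le_top : (2:ℕ∞) ≤ ⊤)))
  exact hs v w

lemma Sm.hx {f : ℝ × ℝ × ℝ → ℝ} (hf : Sm f) (t x y : ℝ) :
    HasDerivAt (fun x => f (t, x, y)) (kDx f (t, x, y)) x := by
  have h := ((hf.differentiable (by simp)) (t, x, y)).hasFDerivAt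
  have h2 : HasDerivAt (fun x : ℝ => ((t, x, y) : ℝ × ℝ × ℝ)) (0, 1, 0) x :=
    (hasDerivAt_const x t).prodMk ((hasDerivAt_id x).prodMk (hasDerivAt_const x y))
  exact h.comp_hasDerivAt x h2

lemma Sm.hy {f : ℝ × ℝ × ℝ → ℝ} (hf : Sm f) (t x y : ℝ) :
    HasDerivAt (fun y => f (t, x, y)) (kDy f (t, x, y)) y := by
  have h := ((hf.differentiable (by simp)) (t, x, y)).hasFDerivAt
  have h2 : HasDerivAt (fun y : ℝ => ((t, x, y) : ℝ × ℝ × ℝ)) (0, 0, 1) y :=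
    (hasDerivAt_const y t).prodMk ((hasDerivAt_const y x).prodMk (hasDerivAt_id y))
  exact h.comp_hasDerivAt y h2

lemma Sm.ht {f : ℝ × ℝ × ℝ → ℝ} (hf : Sm f) (t x y : ℝ) :
    HasDerivAt (fun t => f (t, x, y)) (kDt f (t, x, y)) t := by
  have h := ((hf.differentiable (by simp)) (t, x, y)).hasFDerivAt
  have h2 : HasDerivAt (fun t : ℝ => ((t, x, y) : ℝ × ℝ × ℝ)) (1, 0, 0) t :=
    (hasDerivAt_id t).prodMk ((hasDerivAt_const t x).prodMk (hasDerivAt_const t y))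
  exact h.comp_hasDerivAt t h2

lemma pdx_slice {f : ℝ × ℝ × ℝ → ℝ} (hf : Sm f) (t : ℝ) :
    pdx (fun p => f (t, p)) = fun p => kDx f (t, p) := by
  funext ⟨x, y⟩
  exact (hf.hx t x y).deriv

lemma pdy_slice {f : ℝ × ℝ × ℝ → ℝ} (hf : Sm f) (t : ℝ) :
    pdy (fun p => f (t, p)) = fun p => kDy f (t, p) := by
  funext ⟨x, y⟩
  exact (hf.hy t x y).deriv

lemma Sm.iter {f : ℝ × ℝ × ℝ → ℝ} (hf : Sm f) (w : ℝ × ℝ × ℝ) (n : ℕ) : Sm ((_root_.Dd w)^[n] f) := by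
  induction n with
  | zero => exact hf
  | succ n ih => rw [Function.iterate_succ_apply']; exact ih.Dd w

lemma pd_slice {f : ℝ × ℝ × ℝ → ℝ} (hf : Sm f) (t : ℝ) (i j : ℕ) :
    pd i j (fun p => f (t, p)) = fun p => (kDx^[i] (kDy^[j] f)) (t, p) := by
  unfold pd
  have h1 : pdy^[j] (fun p => f (t, p)) = fun p => (kDy^[j] f) (t, p) := by
    induction j with
    | zero => rfl
    | succ n ih =>
      rw [Function.iterate_succ_apply', Function.iterate_succ_apply', ih, pdy_slice (hf.iter _ n)]
  rw [h1]
  induction i with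
  | zero => rfl
  | succ n ih =>
    rw [Function.iterate_succ_apply', Function.iterate_succ_apply', ih,
      pdx_slice ((hf.iter _ j).iter _ n)]

lemma swap_cont (f : ℝ → ℝ → ℝ) (hf : Continuous (fun p : ℝ × ℝ => f p.1 p.2)) (a b c d : ℝ)
    (hab : a ≤ b) (hcd : c ≤ d) :
    ∫ x in a..b, ∫ y in c..d, f x y = ∫ y in c..d, ∫ x in a..b, f x y := by
  simp only [intervalIntegral.integral_of_le hab, intervalIntegral.integral_of_le hcd]
  apply MeasureTheory.integral_integral_swap
  rw [Measure.prod_restrict]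
  have : IntegrableOn (fun p : ℝ × ℝ => f p.1 p.2) (Set.Icc a b ×ˢ Set.Icc c d) :=
    hf.continuousOn.integrableOn_compact (isCompact_Icc.prod isCompact_Icc)
  exact this.mono_set (Set.prod_mono Set.Ioc_subset_Icc_self Set.Ioc_subset_Icc_self)

lemma rect_ineq (R L : ℝ) (hR : 0 ≤ R) (hL : 0 ≤ L) (g A dA B dB G : ℝ → ℝ → ℝ)
    (hdA : Continuous (fun p : ℝ × ℝ => dA p.1 p.2))
    (hdB : Continuous (fun p : ℝ × ℝ => dB p.1 p.2))
    (hG : Continuous (fun p : ℝ × ℝ => G p.1 p.2))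
    (hA : ∀ x y, HasDerivAt (fun x => A x y) (dA x y) x)
    (hB : ∀ x y, HasDerivAt (fun y => B x y) (dB x y) y)
    (hg : ∀ x ∈ Set.Icc 0 R, ∀ y ∈ Set.Icc 0 L, g x y = dA x y + dB x y + G x y)
    (hA0 : ∀ y ∈ Set.Icc 0 L, A R y - A 0 y ≤ 0)
    (hB0 : ∀ x ∈ Set.Icc 0 R, B x L - B x 0 = 0) :
    ∫ x in (0:ℝ)..R, ∫ y in (0:ℝ)..L, g x y ≤ ∫ x in (0:ℝ)..R, ∫ y in (0:ℝ)..L, G x y := by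
  have c1 : ∀ x, Continuous (fun y => dA x y) := fun x => by fun_prop
  have c1' : ∀ y, Continuous (fun x => dA x y) := fun x => by fun_prop
  have c2 : ∀ x, Continuous (fun y => dB x y) := fun x => by fun_prop
  have c3 : ∀ x, Continuous (fun y => G x y) := fun x => by fun_prop
  have e1 : ∫ x in (0:ℝ)..R, ∫ y in (0:ℝ)..L, g x y =
      ∫ x in (0:ℝ)..R, ((∫ y in (0:ℝ)..L, dA x y) + ∫ y in (0:ℝ)..L, G x y) := by
    apply intervalIntegral.integral_congr
    intro x hx
    rw [Set.uIcc_of_le hR] at hx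
    have : ∫ y in (0:ℝ)..L, g x y = ∫ y in (0:ℝ)..L, (dA x y + dB x y + G x y) := by
      apply intervalIntegral.integral_congr
      intro y hy
      rw [Set.uIcc_of_le hL] at hy
      exact hg x hx y hy
    simp only [this]
    rw [intervalIntegral.integral_add, intervalIntegral.integral_add]
    · have : ∫ y in (0:ℝ)..L, dB x y = B x L - B x 0 :=
        intervalIntegral.integral_eq_sub_of_hasDerivAt (fun y _ => hB x y)
          ((c2 x).intervalIntegrable _ _)
      rw [this, hB0 x hx, add_zero]
    · exact (c1 x).intervalIntegrable _ _
    · exact (c2 x).intervalIntegrable _ _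
    · exact ((c1 x).add (c2 x)).intervalIntegrable _ _
    · exact (c3 x).intervalIntegrable _ _
  have k1 : Continuous (fun x => ∫ y in (0:ℝ)..L, dA x y) :=
    intervalIntegral.continuous_parametric_intervalIntegral_of_continuous' hdA _ _
  have k2 : Continuous (fun x => ∫ y in (0:ℝ)..L, G x y) :=
    intervalIntegral.continuous_parametric_intervalIntegral_of_continuous' hG _ _
  rw [e1, intervalIntegral.integral_add (k1.intervalIntegrable _ _) (k2.intervalIntegrable _ _),
    swap_cont dA hdA 0 R 0 L hR hL]
  have : ∫ y in (0:ℝ)..L, ∫ x in (0:ℝ)..R, dA x y ≤ 0 := by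
    rw [← neg_nonneg, ← intervalIntegral.integral_neg]
    apply intervalIntegral.integral_nonneg hL
    intro y hy
    rw [neg_nonneg]
    rw [intervalIntegral.integral_eq_sub_of_hasDerivAt (fun x _ => hA x y)
          ((c1' y).intervalIntegrable _ _)]
    exact hA0 y hy
  linarith

lemma time_ineq (R L a b c : ℝ) (hR : 0 ≤ R) (hL : 0 ≤ L) (hab : a ≤ b)
    (e e' : ℝ → ℝ → ℝ → ℝ)
    (he : Continuous (fun q : ℝ × ℝ × ℝ => e q.1 q.2.1 q.2.2))
    (he' : Continuous (fun q : ℝ × ℝ × ℝ => e' q.1 q.2.1 q.2.2))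
    (hd : ∀ t x y, HasDerivAt (fun t => e t x y) (e' t x y) t)
    (hc : ∀ t ∈ Set.Icc a b, ∫ x in (0:ℝ)..R, ∫ y in (0:ℝ)..L, e' t x y ≤ c) :
    (∫ x in (0:ℝ)..R, ∫ y in (0:ℝ)..L, e b x y) - (∫ x in (0:ℝ)..R, ∫ y in (0:ℝ)..L, e a x y)
      ≤ c * (b - a) := by
  have cc : ∀ t, Continuous (fun p : ℝ × ℝ => e t p.1 p.2) := fun t =>
    he.comp (by fun_prop : Continuous (fun p : ℝ × ℝ => ((t, p.1, p.2) : ℝ × ℝ × ℝ)))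
  have ccy : ∀ t x, Continuous (fun y : ℝ => e t x y) := fun t x =>
    he.comp (by fun_prop : Continuous (fun y : ℝ => ((t, x, y) : ℝ × ℝ × ℝ)))
  have cct' : ∀ x y, Continuous (fun t : ℝ => e' t x y) := fun x y =>
    he'.comp (by fun_prop : Continuous (fun t : ℝ => ((t, x, y) : ℝ × ℝ × ℝ)))
  have k : ∀ t, Continuous (fun x => ∫ y in (0:ℝ)..L, e t x y) := fun t =>
    intervalIntegral.continuous_parametric_intervalIntegral_of_continuous' (cc t) _ _
  have kk : Continuous (fun p : ℝ × ℝ => ∫ y in (0:ℝ)..L, e' p.2 p.1 y) :=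
    intervalIntegral.continuous_parametric_intervalIntegral_of_continuous'
      (f := fun (p : ℝ × ℝ) y => e' p.2 p.1 y)
      (he'.comp (by fun_prop : Continuous (fun p : (ℝ × ℝ) × ℝ => ((p.1.2, p.1.1, p.2) : ℝ × ℝ × ℝ)))) _ _
  have kkk : Continuous (fun t => ∫ x in (0:ℝ)..R, ∫ y in (0:ℝ)..L, e' t x y) :=
    intervalIntegral.continuous_parametric_intervalIntegral_of_continuous'
      (f := fun t x => ∫ y in (0:ℝ)..L, e' t x y)
      (kk.comp continuous_swap) _ _
  rw [← intervalIntegral.integral_sub ((k b).intervalIntegrable _ _) ((k a).intervalIntegrable _ _)]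
  have e1 : ∀ x, (∫ y in (0:ℝ)..L, e b x y) - (∫ y in (0:ℝ)..L, e a x y) =
      ∫ t in a..b, ∫ y in (0:ℝ)..L, e' t x y := by
    intro x
    rw [← intervalIntegral.integral_sub ((ccy b x).intervalIntegrable _ _)
      ((ccy a x).intervalIntegrable _ _)]
    rw [swap_cont (fun t y => e' t x y)
      (he'.comp (by fun_prop : Continuous (fun p : ℝ × ℝ => ((p.1, x, p.2) : ℝ × ℝ × ℝ))))
      a b 0 L hab hL]
    congr 1
    funext y
    rw [intervalIntegral.integral_eq_sub_of_hasDerivAt (fun t _ => hd t x y)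
      ((cct' x y).intervalIntegrable _ _)]
  simp only [e1]
  rw [swap_cont (fun x t => ∫ y in (0:ℝ)..L, e' t x y) kk 0 R a b hR hab]
  calc _ ≤ ∫ t in a..b, c := intervalIntegral.integral_mono_on hab (kkk.intervalIntegrable _ _)
        (by simp) hc
    _ = c * (b - a) := by simp [mul_comm]

lemma G_bound (r K S χ χ1 χ2 U v a1 a2 a3 a4 a5 b1 b2 c2 : ℝ) (hr : 0 ≤ r)
    (hK : |U| ≤ K) (h1 : |χ1| ≤ 2 * r) (h2 : |χ2| ≤ 2 * r)
    (heq : v + a1 + U * a1 + a3 + c2 - a5 = 0)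
    (hS : S = U ^ 2 + a1 ^ 2 + a2 ^ 2 + a3 ^ 2 + a4 ^ 2 + a5 ^ 2 + b1 ^ 2 + b2 ^ 2 + c2 ^ 2) :
    2 * ((2 * χ1 * a3 + χ2 * a2 - χ1 * a1) * v - χ1 * (a4 - a2 - b2 - U ^ 2 / 2) ^ 2 / 2
      + χ1 * a3 * a1 - χ1 * a2 ^ 2 / 2 - χ1 * a1 ^ 2 / 2 + χ1 * b1 ^ 2 / 2 - χ1 * U ^ 3 / 6)
      ≤ 160 * (1 + K ^ 2) * r * S := by
  have hK0 : 0 ≤ K := (abs_nonneg _).trans hK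
  have hU2 : U ^ 2 ≤ K ^ 2 := by rw [← sq_abs U]; gcongr
  have hS0 : 0 ≤ S := by rw [hS]; positivity
  have hv : v = a5 - a3 - c2 - a1 - U * a1 := by linarith
  have hv2 : v ^ 2 ≤ 5 * (1 + K ^ 2) * S := by
    have e1 : v ^ 2 ≤ 5 * (a5 ^ 2 + a3 ^ 2 + c2 ^ 2 + a1 ^ 2 + U ^ 2 * a1 ^ 2) := by
      rw [hv]
      linarith [sq_nonneg (a5 + a3), sq_nonneg (a5 + c2), sq_nonneg (a5 + a1),
        sq_nonneg (a5 + U * a1), sq_nonneg (a3 - c2), sq_nonneg (a3 - a1), sq_nonneg (a3 - U * a1),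
        sq_nonneg (c2 - a1), sq_nonneg (c2 - U * a1), sq_nonneg (a1 - U * a1)]
    have e2 : U ^ 2 * a1 ^ 2 ≤ K ^ 2 * S := by
      have : a1 ^ 2 ≤ S := by rw [hS]; linarith [sq_nonneg U, sq_nonneg a2, sq_nonneg a3, sq_nonneg a4, sq_nonneg a5, sq_nonneg b1, sq_nonneg b2, sq_nonneg c2]
      gcongr
    have e3 : a5 ^ 2 + a3 ^ 2 + c2 ^ 2 + a1 ^ 2 ≤ S := by
      rw [hS]; linarith [sq_nonneg U, sq_nonneg a2, sq_nonneg a4, sq_nonneg b1, sq_nonneg b2]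
    linarith
  have hF2 : (a4 - a2 - b2 - U ^ 2 / 2) ^ 2 ≤ 4 * (1 + K ^ 2) * S := by
    have e1 : (a4 - a2 - b2 - U ^ 2 / 2) ^ 2 ≤ 4 * (a4 ^ 2 + a2 ^ 2 + b2 ^ 2 + U ^ 2 * U ^ 2 / 4) := by
      linarith [sq_nonneg (a4 + a2), sq_nonneg (a4 + b2), sq_nonneg (a4 + U ^ 2 / 2),
        sq_nonneg (a2 - b2), sq_nonneg (a2 - U ^ 2 / 2), sq_nonneg (b2 - U ^ 2 / 2)]
    have e2 : U ^ 2 * U ^ 2 ≤ K ^ 2 * S := by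
      have : U ^ 2 ≤ S := by rw [hS]; linarith [sq_nonneg a1, sq_nonneg a2, sq_nonneg a3, sq_nonneg a4, sq_nonneg a5, sq_nonneg b1, sq_nonneg b2, sq_nonneg c2]
      gcongr
    have e3 : a4 ^ 2 + a2 ^ 2 + b2 ^ 2 ≤ S := by
      rw [hS]; linarith [sq_nonneg U, sq_nonneg a1, sq_nonneg a3, sq_nonneg a5, sq_nonneg b1, sq_nonneg c2]
    have : 0 ≤ K ^ 2 * S := by positivity
    linarith
  have hs1 : a1 ^ 2 + a2 ^ 2 + a3 ^ 2 + b1 ^ 2 + U ^ 2 ≤ S := by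
    rw [hS]; linarith [sq_nonneg a4, sq_nonneg a5, sq_nonneg b2, sq_nonneg c2]
  have hU3 : |U ^ 3| ≤ (1 + K ^ 2) * S := by
    have : |U ^ 3| = |U| * U ^ 2 := by rw [pow_succ, abs_mul, abs_of_nonneg (sq_nonneg U), mul_comm]
    rw [this]
    have k1 : |U| ≤ 1 + K ^ 2 := by linarith [sq_nonneg (K - 1)]
    have k2 : U ^ 2 ≤ S := by linarith [sq_nonneg a1, sq_nonneg a2, sq_nonneg a3, sq_nonneg b1]
    gcongr
  have hSK : S ≤ (1 + K ^ 2) * S := by linarith [mul_nonneg (sq_nonneg K) hS0]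
  obtain ⟨M, hM⟩ : ∃ M, M = (1 + K ^ 2) * S := ⟨_, rfl⟩
  have hM0 : 0 ≤ M := by rw [hM]; positivity
  rw [← hM] at hSK hU3
  rw [mul_assoc, ← hM] at hv2 hF2
  obtain ⟨H, hH⟩ : ∃ H, H = 2 * a3 * v - a1 * v - (a4 - a2 - b2 - U ^ 2 / 2) ^ 2 / 2 + a3 * a1
    - a2 ^ 2 / 2 - a1 ^ 2 / 2 + b1 ^ 2 / 2 - U ^ 3 / 6 := ⟨_, rfl⟩
  have hHM : |H| ≤ 20 * M := by
    have := abs_le.1 hU3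
    rw [abs_le, hH]
    constructor <;>
    linarith [sq_nonneg (a3 - v), sq_nonneg (a3 + v), sq_nonneg (a1 - v), sq_nonneg (a1 + v),
      sq_nonneg (a3 - a1), sq_nonneg (a3 + a1), sq_nonneg a1, sq_nonneg a2, sq_nonneg a3,
      sq_nonneg b1, sq_nonneg U, sq_nonneg (a4 - a2 - b2 - U ^ 2 / 2)]
  have hJ : |a2 * v| ≤ 20 * M := by
    rw [abs_le]
    constructor <;>
    linarith [sq_nonneg (a2 - v), sq_nonneg (a2 + v), sq_nonneg a1, sq_nonneg a2, sq_nonneg a3,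
      sq_nonneg b1, sq_nonneg U]
  have e1 : χ1 * H ≤ 2 * r * (20 * M) := by
    calc χ1 * H ≤ |χ1 * H| := le_abs_self _
      _ = |χ1| * |H| := abs_mul _ _
      _ ≤ _ := by gcongr
  have e2 : χ2 * (a2 * v) ≤ 2 * r * (20 * M) := by
    calc χ2 * (a2 * v) ≤ |χ2 * (a2 * v)| := le_abs_self _
      _ = |χ2| * |a2 * v| := abs_mul _ _
      _ ≤ _ := by gcongr
  calc _ = 2 * (χ1 * H + χ2 * (a2 * v)) := by rw [hH]; ring
    _ ≤ 2 * (2 * r * (20 * M) + 2 * r * (20 * M)) := by gcongr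
    _ = 160 * (1 + K ^ 2) * r * S := by rw [hM]; ring

lemma A_deriv (x : ℝ) (χ χ1 U v v1 a1 a2 a3 a4 b1 b2 : ℝ → ℝ)
    (χ2 v2 a5 c1 c2 : ℝ)
    (hχ : HasDerivAt χ (χ1 x) x) (hχ1 : HasDerivAt χ1 χ2 x)
    (hU : HasDerivAt U (a1 x) x) (hv : HasDerivAt v (v1 x) x) (hv1 : HasDerivAt v1 v2 x)
    (h1 : HasDerivAt a1 (a2 x) x) (h2 : HasDerivAt a2 (a3 x) x) (h3 : HasDerivAt a3 (a4 x) x)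
    (h4 : HasDerivAt a4 a5 x) (hb1 : HasDerivAt b1 c1 x) (hb2 : HasDerivAt b2 c2 x) :
    HasDerivAt (fun x => 2 * (χ x * a2 x * v1 x - (χ1 x * a2 x + χ x * a3 x) * v x
      + χ x * a1 x * v x + χ x * (a4 x - a2 x - b2 x - U x ^ 2 / 2) ^ 2 / 2 - χ x * a3 x * a1 x
      + χ x * a2 x ^ 2 / 2 + χ x * a1 x ^ 2 / 2 - χ x * b1 x ^ 2 / 2 + χ x * U x ^ 3 / 6))
      (2 * ((χ1 x * a2 x + χ x * a3 x) * v1 x + χ x * a2 x * v2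
        - (χ2 * a2 x + 2 * χ1 x * a3 x + χ x * a4 x) * v x - (χ1 x * a2 x + χ x * a3 x) * v1 x
        + χ1 x * a1 x * v x + χ x * a2 x * v x + χ x * a1 x * v1 x
        + χ1 x * (a4 x - a2 x - b2 x - U x ^ 2 / 2) ^ 2 / 2
        + χ x * (a4 x - a2 x - b2 x - U x ^ 2 / 2) * (a5 - a3 x - c2 - U x * a1 x)
        - χ1 x * a3 x * a1 x - χ x * a4 x * a1 x - χ x * a3 x * a2 x
        + χ1 x * a2 x ^ 2 / 2 + χ x * a2 x * a3 x
        + χ1 x * a1 x ^ 2 / 2 + χ x * a1 x * a2 x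
        - χ1 x * b1 x ^ 2 / 2 - χ x * b1 x * c1
        + χ1 x * U x ^ 3 / 6 + χ x * U x ^ 2 * a1 x / 2)) x := by
  have k1 := (hχ.mul h2).mul hv1
  have k2 := ((hχ1.mul h2).add (hχ.mul h3)).mul hv
  have k3 := (hχ.mul h1).mul hv
  have k4 := (hχ.mul ((((h4.sub h2).sub hb2).sub ((hU.pow 2).div_const 2)).pow 2)).div_const 2
  have k5 := (hχ.mul h3).mul h1
  have k6 := (hχ.mul (h2.pow 2)).div_const 2
  have k7 := (hχ.mul (h1.pow 2)).div_const 2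
  have k8 := (hχ.mul (hb1.pow 2)).div_const 2
  have k9 := (hχ.mul (hU.pow 3)).div_const 6
  have := ((((((((k1.sub k2).add k3).add k4).sub k5).add k6).add k7).sub k8).add k9).const_mul 2
  refine this.congr_deriv ?_
  simp only [Pi.mul_apply, Pi.add_apply, Pi.sub_apply, Pi.pow_apply]
  push_cast
  ring

lemma energy_R (L T R K Cs : ℝ) (hL : 0 < L) (hR : 1 ≤ R)
    (U v v1 v2 w a1 a2 a3 a4 a5 b1 b2 c1 c2 : ℝ × ℝ × ℝ → ℝ)
    (sU : Sm U) (sv : Sm v) (sv1 : Sm v1) (sv2 : Sm v2) (sw : Sm w) (s1 : Sm a1) (s2 : Sm a2)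
    (s3 : Sm a3) (s4 : Sm a4) (s5 : Sm a5) (sb1 : Sm b1) (sb2 : Sm b2) (sc1 : Sm c1) (sc2 : Sm c2)
    (tU : kDt U = v) (t1 : kDt a1 = v1) (t2 : kDt a2 = v2) (tb : kDt b1 = w)
    (xU : kDx U = a1) (x1 : kDx a1 = a2) (x2 : kDx a2 = a3) (x3 : kDx a3 = a4) (x4 : kDx a4 = a5)
    (xv : kDx v = v1) (xv1 : kDx v1 = v2) (xb1 : kDx b1 = c1) (xb2 : kDx b2 = c2)
    (yU : kDy U = b1) (yb1 : kDy b1 = b2) (y1 : kDy a1 = c1) (yv : kDy v = w)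
    (heq : ∀ t ∈ Set.Icc 0 T, ∀ x ∈ Set.Ici (0:ℝ), ∀ y ∈ Set.Icc 0 L,
      v (t, x, y) + a1 (t, x, y) + U (t, x, y) * a1 (t, x, y) + a3 (t, x, y) + c2 (t, x, y)
        - a5 (t, x, y) = 0)
    (hK : ∀ t ∈ Set.Icc 0 T, ∀ x ∈ Set.Ici (0:ℝ), ∀ y ∈ Set.Icc 0 L, |U (t, x, y)| ≤ K)
    (hx0 : ∀ t ∈ Set.Icc 0 T, ∀ y ∈ Set.Icc 0 L, U (t, 0, y) = 0 ∧ a1 (t, 0, y) = 0 ∧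
      b1 (t, 0, y) = 0 ∧ v (t, 0, y) = 0 ∧ v1 (t, 0, y) = 0)
    (hy0 : ∀ t ∈ Set.Icc 0 T, ∀ x ∈ Set.Ici (0:ℝ), (v (t, x, 0) = 0 ∧ a1 (t, x, 0) = 0) ∧
      (v (t, x, L) = 0 ∧ a1 (t, x, L) = 0))
    (hS : ∀ t ∈ Set.Icc 0 T, ∫ x in (0:ℝ)..R, ∫ y in (0:ℝ)..L, (U (t, x, y) ^ 2 + a1 (t, x, y) ^ 2
      + a2 (t, x, y) ^ 2 + a3 (t, x, y) ^ 2 + a4 (t, x, y) ^ 2 + a5 (t, x, y) ^ 2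
      + b1 (t, x, y) ^ 2 + b2 (t, x, y) ^ 2 + c2 (t, x, y) ^ 2) ≤ Cs)
    (a b : ℝ) (ha : a ∈ Set.Icc 0 T) (hb : b ∈ Set.Icc 0 T) (hab : a ≤ b) :
    (∫ x in (0:ℝ)..R, ∫ y in (0:ℝ)..L, (1 - R⁻¹ * x) ^ 2 * (a2 (b, x, y) ^ 2 + a1 (b, x, y) ^ 2
      + b1 (b, x, y) ^ 2 - U (b, x, y) ^ 3 / 3)) -
    (∫ x in (0:ℝ)..R, ∫ y in (0:ℝ)..L, (1 - R⁻¹ * x) ^ 2 * (a2 (a, x, y) ^ 2 + a1 (a, x, y) ^ 2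
      + b1 (a, x, y) ^ 2 - U (a, x, y) ^ 3 / 3)) ≤ 160 * (1 + K ^ 2) * R⁻¹ * Cs * (b - a) := by
  have hR0 : 0 < R := by linarith
  obtain ⟨r, hr⟩ : ∃ r, r = R⁻¹ := ⟨_, rfl⟩
  have hr0 : 0 ≤ r := by rw [hr]; positivity
  have hr1 : r ≤ 1 := by rw [hr]; exact inv_le_one_of_one_le₀ hR
  have hrR : r * R = 1 := by rw [hr]; field_simp
  rw [← hr]
  have cU := sU.continuous
  have cv := sv.continuous
  have cv1 := sv1.continuous
  have cv2 := sv2.continuous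
  have cw := sw.continuous
  have k1 := s1.continuous
  have k2 := s2.continuous
  have k3 := s3.continuous
  have k4 := s4.continuous
  have k5 := s5.continuous
  have cb1 := sb1.continuous
  have cb2 := sb2.continuous
  have cc1 := sc1.continuous
  have cc2 := sc2.continuous
  apply time_ineq R L a b _ hR0.le hL.le hab
    (fun t x y => (1 - r * x) ^ 2 * (a2 (t, x, y) ^ 2 + a1 (t, x, y) ^ 2
      + b1 (t, x, y) ^ 2 - U (t, x, y) ^ 3 / 3))
    (fun t x y => (1 - r * x) ^ 2 * (2 * a2 (t, x, y) * v2 (t, x, y) + 2 * a1 (t, x, y) * v1 (t, x, y)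
      + 2 * b1 (t, x, y) * w (t, x, y) - U (t, x, y) ^ 2 * v (t, x, y)))
  · fun_prop
  · fun_prop
  · intro t x y
    have h2 := s2.ht t x y
    have h1 := s1.ht t x y
    have hb := sb1.ht t x y
    have hU := sU.ht t x y
    rw [t2] at h2
    rw [t1] at h1
    rw [tb] at hb
    rw [tU] at hU
    refine (((((h2.pow 2).add (h1.pow 2)).add (hb.pow 2)).sub
      ((hU.pow 3).div_const 3)).const_mul ((1 - r * x) ^ 2)).congr_deriv ?_
    push_cast
    ring
  intro t ht
  have ht' : t ∈ Set.Icc 0 T := ⟨ha.1.trans ht.1, ht.2.trans hb.2⟩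
  refine (rect_ineq R L hR0.le hL.le _
    (fun x y => 2 * ((1 - r * x) ^ 2 * a2 (t, x, y) * v1 (t, x, y)
      - ((-2 * r * (1 - r * x)) * a2 (t, x, y) + (1 - r * x) ^ 2 * a3 (t, x, y)) * v (t, x, y)
      + (1 - r * x) ^ 2 * a1 (t, x, y) * v (t, x, y)
      + (1 - r * x) ^ 2 * (a4 (t, x, y) - a2 (t, x, y) - b2 (t, x, y) - U (t, x, y) ^ 2 / 2) ^ 2 / 2
      - (1 - r * x) ^ 2 * a3 (t, x, y) * a1 (t, x, y)
      + (1 - r * x) ^ 2 * a2 (t, x, y) ^ 2 / 2 + (1 - r * x) ^ 2 * a1 (t, x, y) ^ 2 / 2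
      - (1 - r * x) ^ 2 * b1 (t, x, y) ^ 2 / 2 + (1 - r * x) ^ 2 * U (t, x, y) ^ 3 / 6))
    _
    (fun x y => 2 * ((1 - r * x) ^ 2 * b1 (t, x, y) * v (t, x, y)
      + (1 - r * x) ^ 2 * b1 (t, x, y) * a1 (t, x, y)))
    (fun x y => 2 * ((1 - r * x) ^ 2 * (b2 (t, x, y) * v (t, x, y) + b1 (t, x, y) * w (t, x, y))
      + (1 - r * x) ^ 2 * (b2 (t, x, y) * a1 (t, x, y) + b1 (t, x, y) * c1 (t, x, y))))
    (fun x y => 2 * ((2 * (-2 * r * (1 - r * x)) * a3 (t, x, y) + (2 * r ^ 2) * a2 (t, x, y)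
      - (-2 * r * (1 - r * x)) * a1 (t, x, y)) * v (t, x, y)
      - (-2 * r * (1 - r * x)) * (a4 (t, x, y) - a2 (t, x, y) - b2 (t, x, y)
        - U (t, x, y) ^ 2 / 2) ^ 2 / 2
      + (-2 * r * (1 - r * x)) * a3 (t, x, y) * a1 (t, x, y)
      - (-2 * r * (1 - r * x)) * a2 (t, x, y) ^ 2 / 2
      - (-2 * r * (1 - r * x)) * a1 (t, x, y) ^ 2 / 2
      + (-2 * r * (1 - r * x)) * b1 (t, x, y) ^ 2 / 2
      - (-2 * r * (1 - r * x)) * U (t, x, y) ^ 3 / 6))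
    ?_ ?_ ?_ (fun x y => A_deriv x (fun x => (1 - r * x) ^ 2) (fun x => -2 * r * (1 - r * x))
      (fun x => U (t, x, y)) (fun x => v (t, x, y)) (fun x => v1 (t, x, y)) (fun x => a1 (t, x, y))
      (fun x => a2 (t, x, y)) (fun x => a3 (t, x, y)) (fun x => a4 (t, x, y))
      (fun x => b1 (t, x, y)) (fun x => b2 (t, x, y)) (2 * r ^ 2) (v2 (t, x, y)) (a5 (t, x, y))
      (c1 (t, x, y)) (c2 (t, x, y)) ?_ ?_ (xU ▸ sU.hx t x y) (xv ▸ sv.hx t x y)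
      (xv1 ▸ sv1.hx t x y) (x1 ▸ s1.hx t x y) (x2 ▸ s2.hx t x y) (x3 ▸ s3.hx t x y)
      (x4 ▸ s4.hx t x y) (xb1 ▸ sb1.hx t x y) (xb2 ▸ sb2.hx t x y)) ?_ ?_ ?_ ?_).trans ?_
  · fun_prop
  · fun_prop
  · fun_prop
  · have := (((hasDerivAt_id x).const_mul r).const_sub 1).pow 2
    refine this.congr_deriv ?_
    simp
    ring
  · have := (((hasDerivAt_id x).const_mul r).const_sub 1).const_mul (-2 * r)
    refine this.congr_deriv ?_
    ring
  · intro x y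
    have hv := sv.hy t x y
    have hb := sb1.hy t x y
    have h1 := s1.hy t x y
    rw [yv] at hv
    rw [yb1] at hb
    rw [y1] at h1
    refine ((((hb.const_mul ((1 - r * x) ^ 2)).mul hv).add
      ((hb.const_mul ((1 - r * x) ^ 2)).mul h1)).const_mul 2).congr_deriv ?_
    ring
  · intro x hx y hy
    have h := heq t ht' x hx.1 y hy
    have hv : v (t, x, y) = a5 (t, x, y) - a3 (t, x, y) - c2 (t, x, y) - a1 (t, x, y)
      - U (t, x, y) * a1 (t, x, y) := by linarith
    simp only [hv]
    ring
  · intro y hy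
    obtain ⟨e1, e2, e3, e4, e5⟩ := hx0 t ht' y hy
    have e6 : 1 - r * R = 0 := by linarith
    simp only [e1, e2, e3, e4, e5, e6]
    nlinarith [sq_nonneg (a4 (t, 0, y) - a2 (t, 0, y) - b2 (t, 0, y)), sq_nonneg (a2 (t, 0, y))]
  · intro x hx
    obtain ⟨⟨e1, e2⟩, e3, e4⟩ := hy0 t ht' x hx.1
    simp [e1, e2, e3, e4]
  · calc _ ≤ ∫ x in (0:ℝ)..R, ∫ y in (0:ℝ)..L, 160 * (1 + K ^ 2) * r * (U (t, x, y) ^ 2 + a1 (t, x, y) ^ 2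
      + a2 (t, x, y) ^ 2 + a3 (t, x, y) ^ 2 + a4 (t, x, y) ^ 2 + a5 (t, x, y) ^ 2
      + b1 (t, x, y) ^ 2 + b2 (t, x, y) ^ 2 + c2 (t, x, y) ^ 2) := by
          apply intervalIntegral.integral_mono_on hR0.le
          · apply Continuous.intervalIntegrable
            fun_prop
          · apply Continuous.intervalIntegrable
            fun_prop
          intro x hx
          apply intervalIntegral.integral_mono_on hL.le
          · apply Continuous.intervalIntegrable
            fun_prop
          · apply Continuous.intervalIntegrable
            fun_prop
          intro y hy
          have hrx : r * x ≤ 1 := by rw [← hrR]; exact mul_le_mul_of_nonneg_left hx.2 hr0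
          have hrx0 : 0 ≤ r * x := mul_nonneg hr0 hx.1
          apply G_bound r K _ ((1 - r * x) ^ 2) _ _ _ _ _ _ _ _ (a5 (t, x, y)) _ _ (c2 (t, x, y)) hr0 (hK t ht' x hx.1 y hy) _ _
            (heq t ht' x hx.1 y hy) rfl
          · rw [abs_le]; constructor <;> nlinarith
          · rw [abs_le]; constructor <;> nlinarith
      _ = 160 * (1 + K ^ 2) * r * ∫ x in (0:ℝ)..R, ∫ y in (0:ℝ)..L, (U (t, x, y) ^ 2 + a1 (t, x, y) ^ 2
      + a2 (t, x, y) ^ 2 + a3 (t, x, y) ^ 2 + a4 (t, x, y) ^ 2 + a5 (t, x, y) ^ 2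
      + b1 (t, x, y) ^ 2 + b2 (t, x, y) ^ 2 + c2 (t, x, y) ^ 2) := by
          simp only [intervalIntegral.integral_const_mul]
      _ ≤ _ := by
          gcongr
          exact hS t ht'

lemma ext_zero (f : ℝ × ℝ × ℝ → ℝ) (hf : Continuous f) (A B C : Set ℝ)
    (h : ∀ t ∈ A, ∀ x ∈ B, ∀ y ∈ C, f (t, x, y) = 0) :
    ∀ t ∈ closure A, ∀ x ∈ closure B, ∀ y ∈ closure C, f (t, x, y) = 0 := by
  intro t ht x hx y hy
  have hcl : IsClosed {q | f q = 0} := isClosed_eq hf continuous_const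
  have hsub : A ×ˢ (B ×ˢ C) ⊆ {q | f q = 0} := fun q hq => h q.1 hq.1 q.2.1 hq.2.1 q.2.2 hq.2.2
  have := (hcl.closure_subset_iff).2 hsub
  rw [closure_prod_eq, closure_prod_eq] at this
  exact this (Set.mk_mem_prod ht (Set.mk_mem_prod hx hy))

lemma deriv_zero_open (g : ℝ → ℝ) (g' t : ℝ) (s : Set ℝ) (hs : IsOpen s) (ht : t ∈ s)
    (h0 : ∀ x ∈ s, g x = 0) (hg : HasDerivAt g g' t) : g' = 0 := by
  have : g =ᶠ[nhds t] fun _ => (0:ℝ) := by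
    filter_upwards [hs.mem_nhds ht] with x hx using h0 x hx
  exact (hg.congr_of_eventuallyEq this.symm).unique (hasDerivAt_const t 0)

lemma rect_eq (R L : ℝ) (hR : 0 ≤ R) (hL : 0 ≤ L) (f : ℝ × ℝ → ℝ) (hf : Continuous f) :
    ∫ x in (0:ℝ)..R, ∫ y in (0:ℝ)..L, f (x, y) = ∫ p in Set.Ioc 0 R ×ˢ Set.Ioc 0 L, f p := by
  simp only [intervalIntegral.integral_of_le hR, intervalIntegral.integral_of_le hL]
  rw [Measure.volume_eq_prod, setIntegral_prod]
  have : IntegrableOn f (Set.Icc 0 R ×ˢ Set.Icc 0 L) :=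
    hf.continuousOn.integrableOn_compact (isCompact_Icc.prod isCompact_Icc)
  exact this.mono_set (Set.prod_mono Set.Ioc_subset_Icc_self Set.Ioc_subset_Icc_self)

lemma strip_ae (L : ℝ) : (Set.Ioi (0:ℝ) ×ˢ Set.Ioo 0 L : Set (ℝ × ℝ)) =ᵐ[volume]
    (Set.Ioi (0:ℝ) ×ˢ Set.Ioc 0 L : Set (ℝ × ℝ)) := by
  rw [Measure.volume_eq_prod]
  exact Measure.set_prod_ae_eq (Filter.EventuallyEq.refl _ _) Ioo_ae_eq_Ioc

lemma rect_le (R L : ℝ) (hR : 0 ≤ R) (hL : 0 ≤ L) (f : ℝ × ℝ → ℝ) (hf : Continuous f)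
    (h0 : ∀ p, 0 ≤ f p) (hi : IntegrableOn f (Set.Ioi (0:ℝ) ×ˢ Set.Ioo 0 L)) :
    ∫ x in (0:ℝ)..R, ∫ y in (0:ℝ)..L, f (x, y) ≤ ∫ p in Set.Ioi (0:ℝ) ×ˢ Set.Ioo 0 L, f p := by
  rw [rect_eq R L hR hL f hf, setIntegral_congr_set (strip_ae L)]
  apply setIntegral_mono_set (hi.congr_set_ae (strip_ae L).symm)
  · exact Filter.Eventually.of_forall h0
  · exact (Set.prod_mono Set.Ioc_subset_Ioi_self le_rfl).eventuallyLE

lemma strip_tendsto (L : ℝ) (hL : 0 ≤ L) (f : ℝ × ℝ → ℝ) (hf : Continuous f)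
    (hi : IntegrableOn f (Set.Ioi (0:ℝ) ×ˢ Set.Ioo 0 L)) :
    Filter.Tendsto (fun n : ℕ => ∫ x in (0:ℝ)..((n:ℝ) + 1), ∫ y in (0:ℝ)..L,
      (1 - ((n:ℝ) + 1)⁻¹ * x) ^ 2 * f (x, y)) Filter.atTop
      (nhds (∫ p in Set.Ioi (0:ℝ) ×ˢ Set.Ioo 0 L, f p)) := by
  rw [setIntegral_congr_set (strip_ae L)]
  have hi' := hi.congr_set_ae (strip_ae L).symm
  have hm : ∀ n : ℕ, MeasurableSet ({p : ℝ × ℝ | p.1 ≤ (n:ℝ) + 1}) := fun n =>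
    measurableSet_le measurable_fst measurable_const
  have e : ∀ n : ℕ, (∫ x in (0:ℝ)..((n:ℝ) + 1), ∫ y in (0:ℝ)..L,
      (1 - ((n:ℝ) + 1)⁻¹ * x) ^ 2 * f (x, y)) = ∫ p in Set.Ioi (0:ℝ) ×ˢ Set.Ioc 0 L,
        Set.indicator {p : ℝ × ℝ | p.1 ≤ (n:ℝ) + 1} (fun p => (1 - ((n:ℝ) + 1)⁻¹ * p.1) ^ 2 * f p) p := by
    intro n
    rw [rect_eq ((n:ℝ) + 1) L (by positivity) hL (fun p => (1 - ((n:ℝ) + 1)⁻¹ * p.1) ^ 2 * f p)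
      (by fun_prop), setIntegral_indicator (hm n)]
    congr 2
    ext ⟨x, y⟩
    simp only [Set.mem_prod, Set.mem_Ioc, Set.mem_inter_iff, Set.mem_Ioi, Set.mem_ofPred_eq]
    tauto
  simp only [e]
  apply tendsto_integral_of_dominated_convergence (fun p => |f p|)
  · intro n
    apply AEStronglyMeasurable.indicator _ (hm n)
    exact (by fun_prop : Continuous (fun p : ℝ × ℝ => (1 - ((n:ℝ) + 1)⁻¹ * p.1) ^ 2 * f p)).aestronglyMeasurable
  · exact hi'.abs
  · intro n
    refine (ae_restrict_iff' (measurableSet_Ioi.prod measurableSet_Ioc)).2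
      (Filter.Eventually.of_forall ?_)
    rintro ⟨x, y⟩ hp
    have hx : 0 < x := hp.1
    by_cases hxn : x ≤ (n:ℝ) + 1
    · rw [Set.indicator_of_mem (by exact hxn), Real.norm_eq_abs, abs_mul]
      have h1 : ((n:ℝ) + 1)⁻¹ * x ≤ 1 := by
        rw [inv_mul_le_iff₀ (by positivity)]; linarith
      have h2 : 0 ≤ ((n:ℝ) + 1)⁻¹ * x := by positivity
      have h3 : |(1 - ((n:ℝ) + 1)⁻¹ * x) ^ 2| ≤ 1 := by
        rw [abs_of_nonneg (sq_nonneg _)]; nlinarith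
      exact mul_le_of_le_one_left (abs_nonneg _) h3
    · rw [Set.indicator_of_notMem (by exact hxn)]
      simp
  · refine Filter.Eventually.of_forall ?_
    intro p
    have h0 : Filter.Tendsto (fun n : ℕ => ((n:ℝ) + 1)⁻¹) Filter.atTop (nhds 0) :=
      tendsto_inv_atTop_zero.comp
        (Filter.tendsto_atTop_add_const_right _ _ tendsto_natCast_atTop_atTop)
    have h1 : Filter.Tendsto (fun n : ℕ => (1 - ((n:ℝ) + 1)⁻¹ * p.1) ^ 2 * f p) Filter.atTop
        (nhds ((1 - 0 * p.1) ^ 2 * f p)) :=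
      (((h0.mul_const p.1).const_sub 1).pow 2).mul_const _
    have h2 : (1 - 0 * p.1) ^ 2 * f p = f p := by ring
    rw [h2] at h1
    refine h1.congr' ?_
    filter_upwards [Filter.eventually_ge_atTop (Nat.ceil p.1)] with n hn
    rw [Set.indicator_of_mem]
    have := Nat.ceil_le.1 hn
    show p.1 ≤ (n:ℝ) + 1
    linarith

/-- Proposition 6.5: for regular solutions of the 2D Kawahara equation with
linear transport term `u_x` on the half-strip `D = (0,∞) × (0,L)`, the modified
energy `‖u_{xx}‖² + ‖∇u‖² − (1/3)∫_D u³` is nonincreasing in time. -/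
theorem kawahara_energy_nonincreasing (L T : ℝ) (hL : 0 < L) (hT : 0 < T)
    (D : Set (ℝ × ℝ)) (hD : D = Set.Ioi (0:ℝ) ×ˢ Set.Ioo 0 L)
    (u : ℝ → ℝ × ℝ → ℝ)
    (hu : ContDiff ℝ (⊤ : ℕ∞) (Function.uncurry u))
    (heq : ∀ t ∈ Set.Icc (0:ℝ) T, ∀ p ∈ D,
      deriv (fun s => u s p) t + pdx (u t) p + u t p * pdx (u t) p +
        pd 3 0 (u t) p + pd 1 2 (u t) p - pd 5 0 (u t) p = 0)
    (hbc1 : ∀ t ∈ Set.Icc (0:ℝ) T, ∀ y ∈ Set.Ioo (0:ℝ) L,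
      u t (0, y) = 0 ∧ pdx (u t) (0, y) = 0)
    (hbc2 : ∀ t ∈ Set.Icc (0:ℝ) T, ∀ x > (0:ℝ),
      u t (x, 0) = 0 ∧ u t (x, L) = 0)
    (hdec : ∀ i j : ℕ, i + j ≤ 5 →
      ∀ ε > 0, ∃ M : ℝ, ∀ x ≥ M, ∀ y : ℝ, ∀ t ∈ Set.Icc (0:ℝ) T,
        |pd i j (u t) (x, y)| ≤ ε)
    (hint : ∀ i j : ℕ, i + j ≤ 5 →
      (∀ t ∈ Set.Icc (0:ℝ) T, IntegrableOn (fun p => (pd i j (u t) p) ^ 2) D) ∧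
        ∃ C : ℝ, ∀ t ∈ Set.Icc (0:ℝ) T, (∫ p in D, (pd i j (u t) p) ^ 2) ≤ C) :
    AntitoneOn
      (fun t =>
        (∫ p in D, ((pd 2 0 (u t) p) ^ 2 + (pdx (u t) p) ^ 2 + (pdy (u t) p) ^ 2)) -
          (1 / 3) * ∫ p in D, (u t p) ^ 3)
      (Set.Icc (0:ℝ) T) := by
  obtain ⟨U, hUd⟩ : ∃ U, U = Function.uncurry u := ⟨_, rfl⟩
  have sU : Sm U := by rw [hUd]; exact hu
  have huU : ∀ t, u t = fun p => U (t, p) := fun t => by rw [hUd]; rfl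
  have hpd : ∀ t i j, pd i j (u t) = fun p => (kDx^[i] (kDy^[j] U)) (t, p) := fun t i j => by
    rw [huU t]; exact pd_slice sU t i j
  have hpx : ∀ t, pdx (u t) = fun p => kDx U (t, p) := fun t => by
    rw [huU t]; exact pdx_slice sU t
  have hpy : ∀ t, pdy (u t) = fun p => kDy U (t, p) := fun t => by
    rw [huU t]; exact pdy_slice sU t
  subst hD
  simp only [hpd, hpx, hpy] at heq hbc1 hbc2 hdec hint ⊢
  simp only [huU] at heq hbc1 hbc2 ⊢
  clear hpd hpx hpy huU hu hUd
  clear u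
  have sv : Sm (kDt U) := sU.Dd _
  have s1 : Sm (kDx U) := sU.Dd _
  have s2 : Sm (kDx (kDx U)) := s1.Dd _
  have s3 : Sm (kDx (kDx (kDx U))) := s2.Dd _
  have s4 : Sm (kDx (kDx (kDx (kDx U)))) := s3.Dd _
  have s5 : Sm (kDx (kDx (kDx (kDx (kDx U))))) := s4.Dd _
  have sb1 : Sm (kDy U) := sU.Dd _
  have sb2 : Sm (kDy (kDy U)) := sb1.Dd _
  have sc1 : Sm (kDx (kDy U)) := sb1.Dd _
  have sc2 : Sm (kDx (kDy (kDy U))) := sb2.Dd _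
  have sv1 : Sm (kDx (kDt U)) := sv.Dd _
  have sv2 : Sm (kDx (kDx (kDt U))) := sv1.Dd _
  have sw : Sm (kDy (kDt U)) := sv.Dd _
  have cU := sU.continuous
  have k1 := s1.continuous
  have k2 := s2.continuous
  have k3 := s3.continuous
  have k4 := s4.continuous
  have k5 := s5.continuous
  have cb1 := sb1.continuous
  have cb2 := sb2.continuous
  have cc2 := sc2.continuous
  have cv := sv.continuous
  have clT : closure (Set.Ioo 0 T) = Set.Icc 0 T := closure_Ioo hT.ne
  have clL : closure (Set.Ioo 0 L) = Set.Icc 0 L := closure_Ioo hL.ne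
  have clX : closure (Set.Ioi (0:ℝ)) = Set.Ici 0 := closure_Ioi 0
  have Tsub : Set.Ioo 0 T ⊆ Set.Icc 0 T := Set.Ioo_subset_Icc_self
  -- extension of the equation
  have heq' : ∀ t ∈ Set.Icc 0 T, ∀ x ∈ Set.Ici (0:ℝ), ∀ y ∈ Set.Icc 0 L,
      kDt U (t, x, y) + kDx U (t, x, y) + U (t, x, y) * kDx U (t, x, y)
        + kDx (kDx (kDx U)) (t, x, y) + kDx (kDy (kDy U)) (t, x, y)
        - kDx (kDx (kDx (kDx (kDx U)))) (t, x, y) = 0 := by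
    rw [← clT, ← clX, ← clL]
    apply ext_zero (fun q => kDt U q + kDx U q + U q * kDx U q
        + kDx (kDx (kDx U)) q + kDx (kDy (kDy U)) q
        - kDx (kDx (kDx (kDx (kDx U)))) q) (by fun_prop)
    intro t ht x hx y hy
    have := heq t (Tsub ht) (x, y) ⟨hx, hy⟩
    rw [(sU.ht t x y).deriv] at this
    exact this
  -- boundary values
  have z1 : ∀ t ∈ Set.Ioo 0 T, ∀ x ∈ ({0} : Set ℝ), ∀ y ∈ Set.Ioo 0 L, U (t, x, y) = 0 := by
    rintro t ht x rfl y hy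
    exact (hbc1 t (Tsub ht) y hy).1
  have z2 : ∀ t ∈ Set.Ioo 0 T, ∀ x ∈ ({0} : Set ℝ), ∀ y ∈ Set.Ioo 0 L, kDx U (t, x, y) = 0 := by
    rintro t ht x rfl y hy
    exact (hbc1 t (Tsub ht) y hy).2
  have z3 : ∀ t ∈ Set.Ioo 0 T, ∀ x ∈ ({0} : Set ℝ), ∀ y ∈ Set.Ioo 0 L, kDy U (t, x, y) = 0 := by
    intro t ht x hx y hy
    exact deriv_zero_open _ _ y _ isOpen_Ioo hy (fun y hy => z1 t ht x hx y hy) (sU.hy t x y)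
  have z4 : ∀ t ∈ Set.Ioo 0 T, ∀ x ∈ ({0} : Set ℝ), ∀ y ∈ Set.Ioo 0 L, kDt U (t, x, y) = 0 := by
    intro t ht x hx y hy
    exact deriv_zero_open _ _ t _ isOpen_Ioo ht (fun t ht => z1 t ht x hx y hy) (sU.ht t x y)
  have z5 : ∀ t ∈ Set.Ioo 0 T, ∀ x ∈ ({0} : Set ℝ), ∀ y ∈ Set.Ioo 0 L,
      kDx (kDt U) (t, x, y) = 0 := by
    intro t ht x hx y hy
    rw [show kDx (kDt U) = kDt (kDx U) from Dd_comm sU _ _]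
    exact deriv_zero_open _ _ t _ isOpen_Ioo ht (fun t ht => z2 t ht x hx y hy) (s1.ht t x y)
  have hx0 : ∀ t ∈ Set.Icc 0 T, ∀ y ∈ Set.Icc 0 L, U (t, 0, y) = 0 ∧ kDx U (t, 0, y) = 0 ∧
      kDy U (t, 0, y) = 0 ∧ kDt U (t, 0, y) = 0 ∧ kDx (kDt U) (t, 0, y) = 0 := by
    rw [← clT, ← clL]
    intro t ht y hy
    have h0 : (0:ℝ) ∈ closure ({0} : Set ℝ) := subset_closure rfl
    exact ⟨ext_zero _ cU _ _ _ z1 t ht 0 h0 y hy, ext_zero _ k1 _ _ _ z2 t ht 0 h0 y hy,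
      ext_zero _ cb1 _ _ _ z3 t ht 0 h0 y hy, ext_zero _ cv _ _ _ z4 t ht 0 h0 y hy,
      ext_zero _ sv1.continuous _ _ _ z5 t ht 0 h0 y hy⟩
  have hyb : ∀ c : ℝ, (∀ t ∈ Set.Icc 0 T, ∀ x > (0:ℝ), U (t, x, c) = 0) →
      ∀ t ∈ Set.Icc 0 T, ∀ x ∈ Set.Ici (0:ℝ), kDt U (t, x, c) = 0 ∧ kDx U (t, x, c) = 0 := by
    intro c hc
    rw [← clT, ← clX]
    intro t ht x hx
    have h0 : c ∈ closure ({c} : Set ℝ) := subset_closure rfl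
    refine ⟨ext_zero _ cv _ _ {c} ?_ t ht x hx c h0, ext_zero _ k1 _ _ {c} ?_ t ht x hx c h0⟩
    · rintro t ht x hx y rfl
      exact deriv_zero_open _ _ t _ isOpen_Ioo ht (fun t ht => hc t (Tsub ht) x hx) (sU.ht t x y)
    · rintro t ht x hx y rfl
      exact deriv_zero_open _ _ x _ isOpen_Ioi hx (fun x hx => hc t (Tsub ht) x hx) (sU.hx t x y)
  have hy0 : ∀ t ∈ Set.Icc 0 T, ∀ x ∈ Set.Ici (0:ℝ),
      (kDt U (t, x, 0) = 0 ∧ kDx U (t, x, 0) = 0) ∧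
      (kDt U (t, x, L) = 0 ∧ kDx U (t, x, L) = 0) := fun t ht x hx =>
    ⟨hyb 0 (fun t ht x hx => (hbc2 t ht x hx).1) t ht x hx,
     hyb L (fun t ht x hx => (hbc2 t ht x hx).2) t ht x hx⟩
  -- boundedness
  obtain ⟨K, hK⟩ : ∃ K, ∀ t ∈ Set.Icc 0 T, ∀ x ∈ Set.Ici (0:ℝ), ∀ y ∈ Set.Icc 0 L,
      |U (t, x, y)| ≤ K := by
    obtain ⟨M, hM⟩ := hdec 0 0 (by norm_num) 1 one_pos
    obtain ⟨K, hK⟩ := ((isCompact_Icc (a := (0:ℝ)) (b := T)).prod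
      ((isCompact_Icc (a := (0:ℝ)) (b := M)).prod (isCompact_Icc (a := (0:ℝ)) (b := L)))).exists_bound_of_continuousOn
      cU.continuousOn
    refine ⟨max K 1, fun t ht x hx y hy => ?_⟩
    rcases le_total M x with h | h
    · exact (hM x h y t ht).trans (le_max_right _ _)
    · exact (hK (t, x, y) ⟨ht, ⟨hx, h⟩, hy⟩).trans (le_max_left _ _)
  -- square integrability
  obtain ⟨i0, C0, B0⟩ := hint 0 0 (by norm_num)
  obtain ⟨i1, C1, B1⟩ := hint 1 0 (by norm_num)
  obtain ⟨i2, C2, B2⟩ := hint 2 0 (by norm_num)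
  obtain ⟨i3, C3, B3⟩ := hint 3 0 (by norm_num)
  obtain ⟨i4, C4, B4⟩ := hint 4 0 (by norm_num)
  obtain ⟨i5, C5, B5⟩ := hint 5 0 (by norm_num)
  obtain ⟨i6, C6, B6⟩ := hint 0 1 (by norm_num)
  obtain ⟨i7, C7, B7⟩ := hint 0 2 (by norm_num)
  obtain ⟨i8, C8, B8⟩ := hint 1 2 (by norm_num)
  simp only [Function.iterate_succ, Function.iterate_zero, Function.comp, id] at i0 i1 i2 i3 i4 i5 i6 i7 i8 B0 B1 B2 B3 B4 B5 B6 B7 B8 ⊢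
  have hS : ∀ R : ℝ, 0 ≤ R → ∀ t ∈ Set.Icc 0 T, ∫ x in (0:ℝ)..R, ∫ y in (0:ℝ)..L,
      (U (t, x, y) ^ 2 + kDx U (t, x, y) ^ 2
      + kDx (kDx U) (t, x, y) ^ 2 + kDx (kDx (kDx U)) (t, x, y) ^ 2
      + kDx (kDx (kDx (kDx U))) (t, x, y) ^ 2 + kDx (kDx (kDx (kDx (kDx U)))) (t, x, y) ^ 2
      + kDy U (t, x, y) ^ 2 + kDy (kDy U) (t, x, y) ^ 2 + kDx (kDy (kDy U)) (t, x, y) ^ 2) ≤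
      C0 + C1 + C2 + C3 + C4 + C5 + C6 + C7 + C8 := by
    intro R hR t ht
    have j1 := (i0 t ht).add (i1 t ht)
    have j2 := j1.add (i2 t ht)
    have j3 := j2.add (i3 t ht)
    have j4 := j3.add (i4 t ht)
    have j5 := j4.add (i5 t ht)
    have j6 := j5.add (i6 t ht)
    have j7 := j6.add (i7 t ht)
    have j8 := j7.add (i8 t ht)
    refine (rect_le R L hR hL.le (fun p => U (t, p) ^ 2 + kDx U (t, p) ^ 2
      + kDx (kDx U) (t, p) ^ 2 + kDx (kDx (kDx U)) (t, p) ^ 2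
      + kDx (kDx (kDx (kDx U))) (t, p) ^ 2 + kDx (kDx (kDx (kDx (kDx U)))) (t, p) ^ 2
      + kDy U (t, p) ^ 2 + kDy (kDy U) (t, p) ^ 2 + kDx (kDy (kDy U)) (t, p) ^ 2)
      (by fun_prop) (fun p => by positivity) j8).trans ?_
    refine (integral_add j7 (i8 t ht)).trans_le (add_le_add ?_ (B8 t ht))
    refine (integral_add j6 (i7 t ht)).trans_le (add_le_add ?_ (B7 t ht))
    refine (integral_add j5 (i6 t ht)).trans_le (add_le_add ?_ (B6 t ht))
    refine (integral_add j4 (i5 t ht)).trans_le (add_le_add ?_ (B5 t ht))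
    refine (integral_add j3 (i4 t ht)).trans_le (add_le_add ?_ (B4 t ht))
    refine (integral_add j2 (i3 t ht)).trans_le (add_le_add ?_ (B3 t ht))
    refine (integral_add j1 (i2 t ht)).trans_le (add_le_add ?_ (B2 t ht))
    exact (integral_add (i0 t ht) (i1 t ht)).trans_le (add_le_add (B0 t ht) (B1 t ht))
  -- integrability of the energy density
  have iq : ∀ t ∈ Set.Icc 0 T, IntegrableOn (fun p => kDx (kDx U) (t, p) ^ 2 + kDx U (t, p) ^ 2
      + kDy U (t, p) ^ 2) (Set.Ioi (0:ℝ) ×ˢ Set.Ioo 0 L) := fun t ht =>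
    ((i2 t ht).add (i1 t ht)).add (i6 t ht)
  have ic : ∀ t ∈ Set.Icc 0 T, IntegrableOn (fun p => U (t, p) ^ 3)
      (Set.Ioi (0:ℝ) ×ˢ Set.Ioo 0 L) := by
    intro t ht
    refine Integrable.mono' ((i0 t ht).const_mul K)
      (by fun_prop : Continuous (fun p => U (t, p) ^ 3)).aestronglyMeasurable ?_
    refine (ae_restrict_iff' (measurableSet_Ioi.prod measurableSet_Ioo)).2
      (Filter.Eventually.of_forall ?_)
    rintro ⟨x, y⟩ hp
    have hk := hK t ht x (Set.Ioi_subset_Ici_self hp.1) y (Set.Ioo_subset_Icc_self hp.2)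
    rw [Real.norm_eq_abs, pow_succ, abs_mul, abs_of_nonneg (sq_nonneg _), mul_comm]
    exact mul_le_mul_of_nonneg_right hk (sq_nonneg _)
  have iE : ∀ t ∈ Set.Icc 0 T, IntegrableOn (fun p => kDx (kDx U) (t, p) ^ 2 + kDx U (t, p) ^ 2
      + kDy U (t, p) ^ 2 - U (t, p) ^ 3 / 3) (Set.Ioi (0:ℝ) ×ˢ Set.Ioo 0 L) := fun t ht =>
    (iq t ht).sub ((ic t ht).div_const 3)
  have eE : ∀ t ∈ Set.Icc 0 T, (∫ p in Set.Ioi (0:ℝ) ×ˢ Set.Ioo 0 L,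
      (kDx (kDx U) (t, p) ^ 2 + kDx U (t, p) ^ 2 + kDy U (t, p) ^ 2))
      - (1 / 3) * ∫ p in Set.Ioi (0:ℝ) ×ˢ Set.Ioo 0 L, U (t, p) ^ 3 =
      ∫ p in Set.Ioi (0:ℝ) ×ˢ Set.Ioo 0 L, (kDx (kDx U) (t, p) ^ 2 + kDx U (t, p) ^ 2
      + kDy U (t, p) ^ 2 - U (t, p) ^ 3 / 3) := by
    intro t ht
    rw [integral_sub (iq t ht) ((ic t ht).div_const 3), integral_div]
    ring
  have tE : ∀ t ∈ Set.Icc 0 T, _ := fun t ht => strip_tendsto L hL.le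
    (fun p => kDx (kDx U) (t, p) ^ 2 + kDx U (t, p) ^ 2
      + kDy U (t, p) ^ 2 - U (t, p) ^ 3 / 3) (by fun_prop) (iE t ht)
  intro a ha b hb hab
  show _ - _ ≤ _ - _
  have fa := eE a ha
  have fb := eE b hb
  refine (fb.trans_le ?_).trans fa.ge
  have lim1 := (tE b hb).sub (tE a ha)
  have h0 : Filter.Tendsto (fun n : ℕ => ((n:ℝ) + 1)⁻¹) Filter.atTop (nhds 0) :=
      tendsto_inv_atTop_zero.comp
        (Filter.tendsto_atTop_add_const_right _ _ tendsto_natCast_atTop_atTop)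
  have lim2 := ((h0.const_mul (160 * (1 + K ^ 2))).mul_const
    (C0 + C1 + C2 + C3 + C4 + C5 + C6 + C7 + C8)).mul_const (b - a)
  have := le_of_tendsto_of_tendsto' lim1 lim2 (fun n => by
    refine energy_R L T ((n:ℝ) + 1) K _ hL (by simp) U _ _ _ _ _ _ _ _ _ _ _ _ _
      sU sv sv1 sv2 sw s1 s2 s3 s4 s5 sb1 sb2 sc1 sc2 rfl (Dd_comm sU _ _) ?_ (Dd_comm sU _ _)
      rfl rfl rfl rfl rfl rfl rfl rfl rfl rfl rfl (Dd_comm sU _ _) rfl heq' hK hx0 hy0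
      (hS _ (by positivity)) a b ha hb hab
    exact (Dd_comm s1 _ _).trans (congrArg kDx (Dd_comm sU _ _)))
  simp only [mul_zero, zero_mul] at this
  linarith
end
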